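/- Let Γ be a y-monotone poly-line drawing of height h of a finite simple planar graph G. Then G has a planar straight-line drawing with the same y-coordinates as Γ and the same left-to-right order in each row; in particular, this straight-line drawing has height h. -/

import Mathlib

open Set

/-- A point in the plane. -/
abbrev Pt : Type := ℝ × ℝ

/-- A point has integer coordinates. -/
def IsIntPt (p : Pt) : Prop := (∃ a : ℤ, p.1 = (a : ℝ)) ∧ (∃ b : ℤ, p.2 = (b : ℝ))

/-- The (closed) segments of a polygonal chain, as pairs of consecutive corners. -/
def chainSegs (l : List Pt) : List (Pt × Pt) := l.zip l.tail

/-- The set of points covered by a polygonal chain. -/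
def chainSet (l : List Pt) : Set Pt := ⋃ s ∈ chainSegs l, segment ℝ s.1 s.2

/-- A polygonal chain is simple (non-self-intersecting): it has at least two
corners, all corners are distinct, and two of its segments meet only if they are
consecutive, and then only in their shared corner. -/
def IsSimpleChain (l : List Pt) : Prop :=
  2 ≤ l.length ∧ l.Nodup ∧
    ∀ i j : ℕ, i < j → ∀ (hi : i < (chainSegs l).length) (hj : j < (chainSegs l).length),
      segment ℝ ((chainSegs l).get ⟨i, hi⟩).1 ((chainSegs l).get ⟨i, hi⟩).2 ∩
        segment ℝ ((chainSegs l).get ⟨j, hj⟩).1 ((chainSegs l).get ⟨j, hj⟩).2 ⊆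
        if j = i + 1 then {((chainSegs l).get ⟨j, hj⟩).1} else (∅ : Set Pt)

/-- Every interior corner of the chain is a genuine bend (a direction change). -/
def GenuineBends (l : List Pt) : Prop :=
  ∀ i : ℕ, ∀ h : i + 2 < l.length,
    ¬ Collinear ℝ ({l.get ⟨i, by omega⟩, l.get ⟨i + 1, by omega⟩, l.get ⟨i + 2, h⟩} : Set Pt)

/-- The chain is a y-monotone path (horizontal segments allowed). -/
def IsMonoChain (l : List Pt) : Prop :=
  (l.map Prod.snd).Chain' (· ≤ ·) ∨ (l.map Prod.snd).Chain' (fun a b => b ≤ a)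

/-- All segments of the chain are horizontal or vertical. -/
def IsOrthoChain (l : List Pt) : Prop :=
  ∀ s ∈ chainSegs l, s.1.1 = s.2.1 ∨ s.1.2 = s.2.2

/-- A poly-line drawing of a graph `G`: every vertex is a point, and every edge
`uv` is the polygonal chain through the list `bends u v` of bend points
(listed in order from `u` to `v`). -/
structure PolylineDrawing {V : Type*} (G : SimpleGraph V) where
  pos : V → Pt
  bends : V → V → List Pt
  bends_symm : ∀ u v, bends v u = (bends u v).reverse

namespace PolylineDrawing

variable {V : Type*} {G : SimpleGraph V}

/-- The corner list of the curve of edge `uv`. -/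
def chain (D : PolylineDrawing G) (u v : V) : List Pt :=
  D.pos u :: (D.bends u v ++ [D.pos v])

/-- The set of points of the curve of edge `uv`. -/
def curve (D : PolylineDrawing G) (u v : V) : Set Pt := chainSet (D.chain u v)

/-- The defining elements of the drawing: vertex points and bends. -/
def points (D : PolylineDrawing G) : Set Pt :=
  Set.range D.pos ∪ ⋃ (u) (v) (_ : G.Adj u v), {p | p ∈ D.bends u v}

/-- The drawing is planar: vertex points are pairwise distinct, every edge curve
is a simple chain whose interior corners are genuine bends, an edge curve contains
no vertex point other than its endpoints, and two distinct edge curves intersect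
only in points of common endpoints. -/
def IsPlanar (D : PolylineDrawing G) : Prop :=
  Function.Injective D.pos ∧
  (∀ u v, G.Adj u v → IsSimpleChain (D.chain u v) ∧ GenuineBends (D.chain u v)) ∧
  (∀ u v w, G.Adj u v → w ≠ u → w ≠ v → D.pos w ∉ D.curve u v) ∧
  (∀ u v x y, G.Adj u v → G.Adj x y → s(u, v) ≠ s(x, y) →
    D.curve u v ∩ D.curve x y ⊆ D.pos '' (({u, v} : Set V) ∩ ({x, y} : Set V)))

/-- All defining elements have integer coordinates. -/
def IntCoords (D : PolylineDrawing G) : Prop := ∀ p ∈ D.points, IsIntPt p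

/-- A straight-line drawing: no edge has bends. -/
def IsStraightLine (D : PolylineDrawing G) : Prop := ∀ u v : V, D.bends u v = []

/-- Every edge curve is a y-monotone path. -/
def IsYMonotone (D : PolylineDrawing G) : Prop :=
  ∀ u v, G.Adj u v → IsMonoChain (D.chain u v)

/-- The drawing fits (after translation) in the rows `1, …, h`. -/
def InHeight (D : PolylineDrawing G) (h : ℕ) : Prop :=
  ∃ y0 : ℤ, ∀ p ∈ D.points, (y0 : ℝ) ≤ p.2 ∧ p.2 ≤ (y0 : ℝ) + (h : ℝ) - 1

/-- The drawing fits (after translation) in the columns `1, …, w`. -/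
def InWidth (D : PolylineDrawing G) (w : ℕ) : Prop :=
  ∃ x0 : ℤ, ∀ p ∈ D.points, (x0 : ℝ) ≤ p.1 ∧ p.1 ≤ (x0 : ℝ) + (w : ℝ) - 1

end PolylineDrawing

/-- An axis-parallel box (possibly degenerated to a segment or a point). -/
structure Box where
  x1 : ℝ
  x2 : ℝ
  y1 : ℝ
  y2 : ℝ
  hx : x1 ≤ x2
  hy : y1 ≤ y2

/-- The set of points of a box. -/
def Box.pts (b : Box) : Set Pt := Set.Icc b.x1 b.x2 ×ˢ Set.Icc b.y1 b.y2

/-- An orthogonal drawing of a graph `G`: every vertex is an axis-aligned box, and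
every edge `uv` is an axis-parallel polygonal chain `chain u v` (its first corner is
the attachment point on the box of `u`, its last corner the attachment point on the
box of `v`). -/
structure OrthDrawing {V : Type*} (G : SimpleGraph V) where
  box : V → Box
  chain : V → V → List Pt
  chain_symm : ∀ u v, chain v u = (chain u v).reverse

namespace OrthDrawing

variable {V : Type*} {G : SimpleGraph V}

/-- The set of points of the curve of edge `uv`. -/
def curve (D : OrthDrawing G) (u v : V) : Set Pt := chainSet (D.chain u v)

/-- The defining elements of the drawing: corners of vertex boxes, and corners
(attachment points and bends) of edge chains. -/
def points (D : OrthDrawing G) : Set Pt :=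
  (⋃ v, ({((D.box v).x1, (D.box v).y1), ((D.box v).x1, (D.box v).y2),
          ((D.box v).x2, (D.box v).y1), ((D.box v).x2, (D.box v).y2)} : Set Pt)) ∪
    ⋃ (u) (v) (_ : G.Adj u v), {p | p ∈ D.chain u v}

/-- All points covered by the drawing (boxes and edge curves). -/
def region (D : OrthDrawing G) : Set Pt :=
  (⋃ v, (D.box v).pts) ∪ ⋃ (u) (v) (_ : G.Adj u v), D.curve u v

/-- The drawing is planar: vertex boxes are pairwise disjoint; every edge curve is a
simple axis-parallel chain, with genuine bends, joining the boxes of its endpoints;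
an edge curve meets a vertex box only in its attachment points; and two distinct
edge curves intersect only in common endpoints. -/
def IsPlanar (D : OrthDrawing G) : Prop :=
  (∀ u v : V, u ≠ v → Disjoint (D.box u).pts (D.box v).pts) ∧
  (∀ u v, G.Adj u v → IsSimpleChain (D.chain u v) ∧ IsOrthoChain (D.chain u v) ∧
      GenuineBends (D.chain u v)) ∧
  (∀ u v, G.Adj u v → ∃ p q l, D.chain u v = p :: (l ++ [q]) ∧
      p ∈ (D.box u).pts ∧ q ∈ (D.box v).pts) ∧
  (∀ u v w, G.Adj u v → D.curve u v ∩ (D.box w).pts ⊆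
      {p | (w = u ∧ (D.chain u v).head? = some p) ∨
           (w = v ∧ (D.chain u v).getLast? = some p)}) ∧
  (∀ u v x y, G.Adj u v → G.Adj x y → s(u, v) ≠ s(x, y) →
      D.curve u v ∩ D.curve x y ⊆
        {p | ((D.chain u v).head? = some p ∨ (D.chain u v).getLast? = some p) ∧
             ((D.chain x y).head? = some p ∨ (D.chain x y).getLast? = some p)})

/-- A flat drawing: every vertex box is degenerated to a horizontal segment. -/
def IsFlat (D : OrthDrawing G) : Prop := ∀ v, (D.box v).y1 = (D.box v).y2

/-- A visibility representation: an orthogonal drawing without bends, i.e. every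
edge is a single horizontal or vertical segment. -/
def IsVR (D : OrthDrawing G) : Prop := ∀ u v, G.Adj u v → (D.chain u v).length = 2

/-- Every edge curve is a y-monotone path. -/
def IsYMonotone (D : OrthDrawing G) : Prop := ∀ u v, G.Adj u v → IsMonoChain (D.chain u v)

/-- All defining elements have integer coordinates. -/
def IntCoords (D : OrthDrawing G) : Prop := ∀ p ∈ D.points, IsIntPt p

/-- The drawing fits (after translation) in the rows `1, …, h`. -/
def InHeight (D : OrthDrawing G) (h : ℕ) : Prop :=
  ∃ y0 : ℤ, ∀ p ∈ D.points, (y0 : ℝ) ≤ p.2 ∧ p.2 ≤ (y0 : ℝ) + (h : ℝ) - 1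

/-- The drawing fits (after translation) in the columns `1, …, w`. -/
def InWidth (D : OrthDrawing G) (w : ℕ) : Prop :=
  ∃ x0 : ℤ, ∀ p ∈ D.points, (x0 : ℝ) ≤ p.1 ∧ p.1 ≤ (x0 : ℝ) + (w : ℝ) - 1

end OrthDrawing

/-!
Cut every edge at every row that it crosses. Placing the vertices within their rows so that the
edges can be drawn straight and all vertices and crossings keep their order in each row is a system
of linear equations and strict linear inequalities. If it has no solution, then by Motzkin's
transposition theorem there are weights on the crossings whose totals over the left parts of the
rows are convex from row to row, in the sense of `LevelGraph.IsBendingMoment`, and one inequality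
carries a positive multiplier.

By a maximum principle all these totals are nonpositive. Suppose that the totals at the two ends of
some left part of a strip are not both zero. The leftmost place where this happens can be followed
along its edge up to a vertex `v`; there one finds two edges with upper end `v` between which the
balance is lost. Going down, the balance stays lost between these two edges until they end at a
common vertex, so they are parallel edges, which a simple graph does not have. Hence all totals
vanish, which contradicts the positive multiplier. Strict inequalities survive rational
approximation, and scaling makes the horizontal positions integers.
-/

/-- A family of objects placed in horizontal rows, no two of them at the same place. -/
structure RowArrangement (α : Type*) where
  row : α → ℤ
  pos : α → ℝ
  eq_of_row_eq_of_pos_eq : ∀ a b, row a = row b → pos a = pos b → a = b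

namespace RowArrangement

variable {α : Type*} (A : RowArrangement α) {a b : α} {y : ℤ} {C : Set α}

/-- An initial (leftmost) part of the row `y`. -/
def IsCut (y : ℤ) (C : Set α) : Prop :=
  (∀ a ∈ C, A.row a = y) ∧ ∀ a ∈ C, ∀ b, A.row b = y → A.pos b ≤ A.pos a → b ∈ C

/-- The cut of all objects of the row of `a` up to `a` itself. -/
def cutLE (a : α) : Set α := {b | A.row b = A.row a ∧ A.pos b ≤ A.pos a}

/-- The cut of all objects strictly to the left of `a` in its row. -/
def cutLT (a : α) : Set α := {b | A.row b = A.row a ∧ A.pos b < A.pos a}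

lemma mem_cutLE_self (a : α) : a ∈ A.cutLE a := ⟨rfl, le_rfl⟩

lemma isCut_cutLE (a : α) : A.IsCut (A.row a) (A.cutLE a) :=
  ⟨fun _ hb => hb.1, fun _ hb _ hc hcb => ⟨hc, hcb.trans hb.2⟩⟩

lemma isCut_cutLT (a : α) : A.IsCut (A.row a) (A.cutLT a) :=
  ⟨fun _ hb => hb.1, fun _ hb _ hc hcb => ⟨hc, hcb.trans_lt hb.2⟩⟩

variable {A}

lemma IsCut.pos_lt (hC : A.IsCut y C) (ha : a ∈ C) (hb : b ∉ C) (hby : A.row b = y) :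
    A.pos a < A.pos b :=
  not_le.1 fun h => hb (hC.2 a ha b hby h)

lemma IsCut.exists_eq_cutLE [Finite α] (hC : A.IsCut y C) (hne : C.Nonempty) :
    ∃ a ∈ C, C = A.cutLE a := by
  obtain ⟨a, ha, hmax⟩ := Set.exists_max_image C A.pos C.toFinite hne
  refine ⟨a, ha, Set.ext fun b => ⟨fun hb => ⟨?_, hmax b hb⟩, fun hb => ?_⟩⟩
  · rw [hC.1 a ha, hC.1 b hb]
  · exact hC.2 a ha b (hb.1.trans (hC.1 a ha)) hb.2

end RowArrangement

/-- The combinatorial skeleton of a drawing whose edges are cut at every row. The nodes in a row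
are the vertices `V` and the dummies `D` (points where an edge passes from one strip to the next);
the strips `S` are the pieces of edges between consecutive rows, those between the rows `y` and
`y + 1` being in row `y`. Ends are indexed by `Bool`: `false` is the lower one, `true` the upper
one. Thus `strip b d` is the strip whose `b`-end is the dummy `d`, and `terminal b s` is the vertex
at which the edge containing `s` ends on side `b`. -/
structure LevelGraph (V D S : Type*) where
  nodes : RowArrangement (V ⊕ D)
  strips : RowArrangement S
  endpt : Bool → S → V ⊕ D
  row_endpt : ∀ b s, nodes.row (endpt b s) = strips.row s + b.toInt
  pos_endpt_le : ∀ b s t, strips.row s = strips.row t → strips.pos s < strips.pos t →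
    nodes.pos (endpt b s) ≤ nodes.pos (endpt b t)
  strip : Bool → D → S
  endpt_eq_inr : ∀ b s d, endpt b s = .inr d ↔ s = strip b d
  terminal : Bool → S → V
  terminal_eq : ∀ b s v, endpt b s = .inl v → terminal b s = v
  terminal_strip : ∀ b d, terminal b (strip true d) = terminal b (strip false d)
  eq_of_terminal_eq : ∀ s t, strips.row s = strips.row t →
    (∀ b, terminal b s = terminal b t) → s = t

/-- The total weight of a set of dummies. -/
noncomputable def moment {D : Type*} [Fintype D] (m : D → ℝ) (A : Set D) : ℝ :=
  ∑ d, A.indicator m d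

lemma moment_empty {D : Type*} [Fintype D] (m : D → ℝ) : moment m ∅ = 0 := by simp [moment]

namespace LevelGraph

variable {V D S : Type*} (L : LevelGraph V D S) {b : Bool} {s t : S} {d : D} {v : V} {y : ℤ}
  {U : Set S} {C : Set (V ⊕ D)} {m : D → ℝ}

lemma endpt_strip (b : Bool) (d : D) : L.endpt b (L.strip b d) = .inr d :=
  (L.endpt_eq_inr b _ d).2 rfl

lemma row_strip (b : Bool) (d : D) :
    L.strips.row (L.strip b d) + b.toInt = L.nodes.row (.inr d) := by
  rw [← L.row_endpt, endpt_strip]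

lemma row_endpt_eq (h : L.strips.row s = L.strips.row t) :
    L.nodes.row (L.endpt b s) = L.nodes.row (L.endpt b t) := by
  rw [L.row_endpt, L.row_endpt, h]

lemma pos_endpt_mono (h : L.strips.row s = L.strips.row t)
    (hst : L.strips.pos s ≤ L.strips.pos t) :
    L.nodes.pos (L.endpt b s) ≤ L.nodes.pos (L.endpt b t) := by
  rcases hst.lt_or_eq with hlt | heq
  · exact L.pos_endpt_le b s t h hlt
  · rw [L.strips.eq_of_row_eq_of_pos_eq s t h heq]

lemma pos_endpt_lt (h : L.strips.row s = L.strips.row t) (hst : L.strips.pos s < L.strips.pos t)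
    (hne : L.endpt b s ≠ L.endpt b t) :
    L.nodes.pos (L.endpt b s) < L.nodes.pos (L.endpt b t) :=
  (L.pos_endpt_mono h hst.le).lt_of_ne fun heq =>
    hne (L.nodes.eq_of_row_eq_of_pos_eq _ _ (L.row_endpt_eq h) heq)

lemma pos_strip_le_iff (h : L.strips.row (L.strip b d) = L.strips.row s) :
    L.strips.pos (L.strip b d) ≤ L.strips.pos s ↔
      L.nodes.pos (.inr d) ≤ L.nodes.pos (L.endpt b s) := by
  rw [← L.endpt_strip b d]
  refine ⟨L.pos_endpt_mono h, fun hle => not_lt.1 fun hlt => ?_⟩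
  refine (L.pos_endpt_lt h.symm hlt fun heq => ?_).not_ge hle
  rw [(L.endpt_eq_inr b s d).1 (heq.trans (L.endpt_strip b d))] at hlt
  exact lt_irrefl _ hlt

lemma le_pos_strip_iff (h : L.strips.row (L.strip b d) = L.strips.row s) :
    L.strips.pos s ≤ L.strips.pos (L.strip b d) ↔
      L.nodes.pos (L.endpt b s) ≤ L.nodes.pos (.inr d) := by
  rw [← L.endpt_strip b d]
  refine ⟨L.pos_endpt_mono h.symm, fun hle => not_lt.1 fun hlt => ?_⟩
  refine (L.pos_endpt_lt h hlt fun heq => ?_).not_ge hle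
  rw [(L.endpt_eq_inr b s d).1 (heq.symm.trans (L.endpt_strip b d))] at hlt
  exact lt_irrefl _ hlt

lemma pos_strip_lt_iff {e : D} (h : L.strips.row (L.strip b d) = L.strips.row (L.strip b e)) :
    L.strips.pos (L.strip b d) < L.strips.pos (L.strip b e) ↔
      L.nodes.pos (.inr d) < L.nodes.pos (.inr e) := by
  rw [← not_le, L.pos_strip_le_iff h.symm, endpt_strip, not_le]

lemma row_strip_eq_iff :
    L.strips.row (L.strip b d) = L.strips.row s ↔
      L.nodes.row (.inr d) = L.nodes.row (L.endpt b s) := by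
  rw [L.row_endpt, ← L.row_strip b d, add_left_inj]

lemma row_strip_eq_row_strip {b' : Bool} {e : D}
    (h : L.strips.row (L.strip b d) = L.strips.row (L.strip b e)) :
    L.strips.row (L.strip b' d) = L.strips.row (L.strip b' e) := by
  rw [row_strip_eq_iff, endpt_strip] at h ⊢
  exact h

lemma isCut_preimage_endpt (b : Bool) (hC : L.nodes.IsCut y C) :
    L.strips.IsCut (y - b.toInt) (L.endpt b ⁻¹' C) := by
  have row_iff (s : S) : L.strips.row s = y - b.toInt ↔ L.nodes.row (L.endpt b s) = y := by
    rw [L.row_endpt, eq_sub_iff_add_eq]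
  refine ⟨fun s hs => (row_iff s).2 (hC.1 _ hs), fun s hs t ht hts => ?_⟩
  have hrow : L.strips.row t = L.strips.row s := ht.trans ((row_iff s).2 (hC.1 _ hs)).symm
  exact hC.2 _ hs _ ((row_iff t).1 ht) (L.pos_endpt_mono hrow hts)

lemma preimage_strip_preimage_endpt (b : Bool) (C : Set (V ⊕ D)) :
    L.strip b ⁻¹' (L.endpt b ⁻¹' C) = Sum.inr ⁻¹' C := by
  ext d
  rw [mem_preimage, mem_preimage, endpt_strip, mem_preimage]

/-- A set of strips and a set of nodes contain the same dummies at the `b`-ends of strips. -/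
def Fits (b : Bool) (U : Set S) (C : Set (V ⊕ D)) : Prop :=
  L.strip b ⁻¹' U = Sum.inr ⁻¹' C

lemma fits_cutLE (b : Bool) (s : S) :
    L.Fits b (L.strips.cutLE s) (L.nodes.cutLE (L.endpt b s)) :=
  Set.ext fun _ => Iff.trans (and_congr_right fun h => L.pos_strip_le_iff h)
    (and_congr_left fun _ => L.row_strip_eq_iff)

lemma fits_cutLT (b : Bool) (s : S) :
    L.Fits b (L.strips.cutLT s) (L.nodes.cutLT (L.endpt b s)) :=
  Set.ext fun _ => Iff.trans
    (and_congr_right fun h => not_le.symm.trans ((L.le_pos_strip_iff h).not.trans not_le))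
    (and_congr_left fun _ => L.row_strip_eq_iff)

lemma preimage_strip_cutLE_of_endpt_eq_inl (h : L.endpt b s = .inl v) :
    L.strip b ⁻¹' L.strips.cutLE s = L.strip b ⁻¹' L.strips.cutLT s := by
  refine Set.ext fun d => and_congr_right fun hrow => le_iff_lt_or_eq.trans
    (or_iff_left fun hpos => ?_)
  rw [← L.strips.eq_of_row_eq_of_pos_eq _ _ hrow hpos, endpt_strip] at h
  exact Sum.inr_ne_inl h

lemma fits_cutLT_cutLE (h : L.endpt b s = .inl v) :
    L.Fits b (L.strips.cutLT s) (L.nodes.cutLE (L.endpt b s)) :=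
  (L.preimage_strip_cutLE_of_endpt_eq_inl h).symm.trans (L.fits_cutLE b s)

lemma fits_cutLE_cutLT (h : L.endpt b s = .inl v) :
    L.Fits b (L.strips.cutLE s) (L.nodes.cutLT (L.endpt b s)) :=
  (L.preimage_strip_cutLE_of_endpt_eq_inl h).trans (L.fits_cutLT b s)

/-- The nodes to the left of or at the `b`-end of some strip of `U`. -/
def shadow (b : Bool) (U : Set S) : Set (V ⊕ D) := ⋃ s ∈ U, L.nodes.cutLE (L.endpt b s)

lemma mem_shadow {n : V ⊕ D} :
    n ∈ L.shadow b U ↔ ∃ s ∈ U, n ∈ L.nodes.cutLE (L.endpt b s) := by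
  simp only [shadow, mem_iUnion₂, exists_prop]

lemma isCut_shadow (b : Bool) (hU : L.strips.IsCut y U) :
    L.nodes.IsCut (y + b.toInt) (L.shadow b U) := by
  have row_end (s : S) (hs : s ∈ U) : L.nodes.row (L.endpt b s) = y + b.toInt := by
    rw [L.row_endpt, hU.1 s hs]
  constructor
  · intro n hn
    obtain ⟨s, hs, hns⟩ := L.mem_shadow.1 hn
    exact hns.1.trans (row_end s hs)
  · intro n hn n' hrow hpos
    obtain ⟨s, hs, hns⟩ := L.mem_shadow.1 hn
    exact L.mem_shadow.2 ⟨s, hs, hrow.trans (row_end s hs).symm, hpos.trans hns.2⟩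

lemma fits_shadow (b : Bool) (hU : L.strips.IsCut y U) : L.Fits b U (L.shadow b U) := by
  ext d
  rw [mem_preimage, mem_preimage, mem_shadow]
  constructor
  · intro hd
    exact ⟨_, hd, by rw [endpt_strip]; exact L.nodes.mem_cutLE_self _⟩
  · rintro ⟨s, hs, hrow, hpos⟩
    have hrow' : L.strips.row (L.strip b d) = L.strips.row s := L.row_strip_eq_iff.2 hrow
    exact hU.2 s hs _ (hrow'.trans (hU.1 s hs)) ((L.pos_strip_le_iff hrow').2 hpos)

lemma preimage_endpt_cutLE (h : L.endpt b s = .inr d) :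
    L.endpt b ⁻¹' L.nodes.cutLE (.inr d) = L.strips.cutLE s := by
  obtain rfl := (L.endpt_eq_inr b s d).1 h
  ext t
  refine Iff.trans ?_ (and_congr_right fun hrow => (L.le_pos_strip_iff hrow.symm).symm)
  exact and_congr_left fun _ => eq_comm.trans (L.row_strip_eq_iff.symm.trans eq_comm)

lemma preimage_endpt_cutLT (h : L.endpt b s = .inr d) :
    L.endpt b ⁻¹' L.nodes.cutLT (.inr d) = L.strips.cutLT s := by
  obtain rfl := (L.endpt_eq_inr b s d).1 h
  ext t
  refine Iff.trans ?_ (and_congr_right fun hrow =>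
    not_le.symm.trans ((L.pos_strip_le_iff hrow.symm).symm.not.trans not_le))
  exact and_congr_left fun _ => eq_comm.trans (L.row_strip_eq_iff.symm.trans eq_comm)

section BendingMoment

variable [Fintype D]

/-- A bending moment is a weight on the dummies for which the cuts carry a convex total: it is what
linear programming duality yields when no straight placement of the nodes exists. -/
def IsBendingMoment (m : D → ℝ) : Prop :=
  ∀ y C, L.nodes.IsCut y C → 2 * moment m (Sum.inr ⁻¹' C) ≤
    moment m (L.strip true ⁻¹' (L.endpt false ⁻¹' C)) +
      moment m (L.strip false ⁻¹' (L.endpt true ⁻¹' C))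

/-- The dummies at the lower ends of the strips of `U` have total weight zero, and so have those at
the upper ends. -/
def Balanced (m : D → ℝ) (U : Set S) : Prop := ∀ b, moment m (L.strip b ⁻¹' U) = 0

variable {L}

lemma Fits.moment_eq (h : L.Fits b U C) :
    moment m (L.strip b ⁻¹' U) = moment m (Sum.inr ⁻¹' C) :=
  congrArg (moment m) h

lemma balanced_empty : L.Balanced m ∅ := fun _ => by rw [preimage_empty, moment_empty]

lemma exists_topmost_maximal_cut [Finite V] (hC : L.nodes.IsCut y C)
    (hpos : 0 < moment m (Sum.inr ⁻¹' C)) :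
    ∃ n, ∀ y C, L.nodes.IsCut y C →
      moment m (Sum.inr ⁻¹' C) ≤ moment m (Sum.inr ⁻¹' L.nodes.cutLE n) ∧
      (moment m (Sum.inr ⁻¹' L.nodes.cutLE n) ≤ moment m (Sum.inr ⁻¹' C) → y ≤ L.nodes.row n) := by
  let M (n : V ⊕ D) : ℝ := moment m (Sum.inr ⁻¹' L.nodes.cutLE n)
  have exists_node {y : ℤ} {C : Set (V ⊕ D)} (hC : L.nodes.IsCut y C)
      (h : 0 < moment m (Sum.inr ⁻¹' C)) :
      ∃ n, L.nodes.row n = y ∧ M n = moment m (Sum.inr ⁻¹' C) := by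
    have hne : C.Nonempty := by
      rw [nonempty_iff_ne_empty]
      rintro rfl
      exact h.ne' (moment_empty m)
    obtain ⟨n, hn, rfl⟩ := hC.exists_eq_cutLE hne
    exact ⟨n, hC.1 n hn, rfl⟩
  obtain ⟨n₀, -, hn₀⟩ := exists_node hC hpos
  have : Nonempty (V ⊕ D) := ⟨n₀⟩
  obtain ⟨n, hn⟩ := Finite.exists_max fun n => toLex (M n, L.nodes.row n)
  have M_le (n') : M n' ≤ M n := (Prod.Lex.toLex_le_toLex.1 (hn n')).elim le_of_lt (·.1.le)
  have M_pos : 0 < M n := (hpos.trans_eq hn₀.symm).trans_le (M_le n₀)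
  refine ⟨n, fun y C hC => ⟨?_, fun hle => ?_⟩⟩
  · by_contra! hlt
    obtain ⟨n', -, hn'⟩ := exists_node hC (M_pos.trans hlt)
    exact (M_le n').not_gt (hlt.trans_eq hn'.symm)
  · obtain ⟨n', rfl, hn'⟩ := exists_node hC (M_pos.trans_le hle)
    exact (Prod.Lex.toLex_le_toLex.1 (hn n')).elim
      (fun h => absurd (hle.trans_eq hn'.symm) h.not_ge) (·.2)

/-- Maximum principle: by convexity a positive maximal moment in one row is also attained in the
next row, and so on forever. -/
theorem IsBendingMoment.moment_cut_nonpos [Finite V] (hm : L.IsBendingMoment m)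
    (hC : L.nodes.IsCut y C) :
    moment m (Sum.inr ⁻¹' C) ≤ 0 := by
  by_contra! hpos
  obtain ⟨n, hmax⟩ := L.exists_topmost_maximal_cut hC hpos
  have hn := L.nodes.isCut_cutLE n
  have isCut_inc (b) := L.isCut_preimage_endpt b hn
  have isCut_up := L.isCut_shadow true (isCut_inc false)
  have down_le := (hmax _ _ (L.isCut_shadow false (isCut_inc true))).1
  have convex := hm _ _ hn
  rw [(L.fits_shadow true (isCut_inc false)).moment_eq,
    (L.fits_shadow false (isCut_inc true)).moment_eq] at convex
  have row_le := (hmax _ _ isCut_up).2 (by linarith)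
  simp only [Bool.toInt_false, Bool.toInt_true] at row_le
  omega

lemma IsBendingMoment.balanced_preimage_endpt [Finite V] (hm : L.IsBendingMoment m)
    (hC : L.nodes.IsCut y C) (h0 : moment m (Sum.inr ⁻¹' C) = 0) (b : Bool) :
    L.Balanced m (L.endpt b ⁻¹' C) := by
  have far_nonpos (b b') : moment m (L.strip b' ⁻¹' (L.endpt b ⁻¹' C)) ≤ 0 := by
    have hU := L.isCut_preimage_endpt b hC
    exact (L.fits_shadow b' hU).moment_eq.trans_le (hm.moment_cut_nonpos (L.isCut_shadow b' hU))
  have convex := hm y C hC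
  intro b'
  rcases Bool.eq_or_eq_not b' b with rfl | rfl
  · rwa [preimage_strip_preimage_endpt]
  · refine (far_nonpos b !b).antisymm ?_
    have h₁ := far_nonpos false true
    have h₂ := far_nonpos true false
    cases b
    · exact show 0 ≤ moment m (L.strip true ⁻¹' (L.endpt false ⁻¹' C)) by linarith
    · exact show 0 ≤ moment m (L.strip false ⁻¹' (L.endpt true ⁻¹' C)) by linarith

lemma IsBendingMoment.balanced_of_fits [Finite V] (hm : L.IsBendingMoment m)
    (hC : L.nodes.IsCut y C) (hfit : L.Fits b U C) (hU : L.Balanced m U) (b' : Bool) :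
    L.Balanced m (L.endpt b' ⁻¹' C) :=
  hm.balanced_preimage_endpt hC (hfit.moment_eq.symm.trans (hU b)) b'

lemma IsBendingMoment.balanced_cutLE_strip [Finite V] (hm : L.IsBendingMoment m)
    (h : L.Balanced m (L.strips.cutLE (L.strip b d))) (b' : Bool) :
    L.Balanced m (L.strips.cutLE (L.strip b' d)) := by
  have hfit := L.fits_cutLE b (L.strip b d)
  rw [endpt_strip] at hfit
  rw [← L.preimage_endpt_cutLE (L.endpt_strip b' d)]
  exact hm.balanced_of_fits (L.nodes.isCut_cutLE _) hfit h b'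

lemma IsBendingMoment.balanced_cutLT_strip [Finite V] (hm : L.IsBendingMoment m)
    (h : L.Balanced m (L.strips.cutLT (L.strip b d))) (b' : Bool) :
    L.Balanced m (L.strips.cutLT (L.strip b' d)) := by
  have hfit := L.fits_cutLT b (L.strip b d)
  rw [endpt_strip] at hfit
  rw [← L.preimage_endpt_cutLT (L.endpt_strip b' d)]
  exact hm.balanced_of_fits (L.nodes.isCut_cutLT _) hfit h b'

/-- The first place in a row of strips at which the balance is lost. -/
def IsLeftCritical (L : LevelGraph V D S) (m : D → ℝ) (s : S) : Prop :=
  L.Balanced m (L.strips.cutLT s) ∧ ¬ L.Balanced m (L.strips.cutLE s)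

/-- Two strips on edges with the same top vertex, such that the balance is lost exactly between
them. -/
structure IsWedge (L : LevelGraph V D S) (m : D → ℝ) (s t : S) : Prop where
  row_eq : L.strips.row s = L.strips.row t
  pos_lt : L.strips.pos s < L.strips.pos t
  balanced_left : L.Balanced m (L.strips.cutLT s)
  balanced_right : L.Balanced m (L.strips.cutLE t)
  not_balanced : ∀ U, L.strips.IsCut (L.strips.row s) U → s ∈ U → t ∉ U → ¬ L.Balanced m U
  top_eq : L.terminal true s = L.terminal true t

lemma exists_isLeftCritical [Finite S] (hU : L.strips.IsCut y U) (hb : ¬ L.Balanced m U) :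
    ∃ s, L.IsLeftCritical m s := by
  have exists_eq {y : ℤ} {U : Set S} (hU : L.strips.IsCut y U) (hb : ¬ L.Balanced m U) :
      ∃ s ∈ U, U = L.strips.cutLE s :=
    hU.exists_eq_cutLE (nonempty_iff_ne_empty.2 fun h => hb (h ▸ balanced_empty))
  obtain ⟨s₀, -, rfl⟩ := exists_eq hU hb
  obtain ⟨s, ⟨hrow, hs⟩, hmin⟩ := Set.exists_min_image
    {s | L.strips.row s = L.strips.row s₀ ∧ ¬ L.Balanced m (L.strips.cutLE s)} L.strips.pos
    (Set.toFinite _) ⟨s₀, rfl, hb⟩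
  refine ⟨s, by_contra fun hlt => ?_, hs⟩
  obtain ⟨t, ht, heq⟩ := exists_eq (L.strips.isCut_cutLT s) hlt
  exact (hmin t ⟨ht.1.trans hrow, heq ▸ hlt⟩).not_gt ht.2

lemma IsLeftCritical.strip [Finite V] (hm : L.IsBendingMoment m) {b : Bool}
    (h : L.IsLeftCritical m (L.strip b d)) (b' : Bool) : L.IsLeftCritical m (L.strip b' d) :=
  ⟨hm.balanced_cutLT_strip h.1 b', fun h' => h.2 (hm.balanced_cutLE_strip h' b)⟩

lemma exists_isLeftCritical_endpt_eq_inl [Finite V] [Finite S] (hm : L.IsBendingMoment m)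
    (h : ∃ s, L.IsLeftCritical m s) :
    ∃ s v, L.IsLeftCritical m s ∧ L.endpt true s = .inl v := by
  obtain ⟨s, hs, hmax⟩ := Set.exists_max_image {s | L.IsLeftCritical m s} L.strips.row
    (Set.toFinite _) h
  rcases hend : L.endpt true s with v | d
  · exact ⟨s, v, hs, hend⟩
  · obtain rfl := (L.endpt_eq_inr _ _ _).1 hend
    have row_le := hmax _ (hs.strip hm false)
    have row_true := L.row_strip true d
    rw [← L.row_strip false d, Bool.toInt_true, Bool.toInt_false] at row_true
    omega

lemma IsLeftCritical.exists_balanced_right [Finite V] [Finite S] (hm : L.IsBendingMoment m)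
    (hs : L.IsLeftCritical m s) (hv : L.endpt true s = .inl v) :
    ∃ t, L.strips.row t = L.strips.row s ∧ L.strips.pos s < L.strips.pos t ∧
      L.nodes.pos (L.endpt true t) ≤ L.nodes.pos (L.endpt true s) ∧
      L.Balanced m (L.strips.cutLE t) := by
  have hC := L.nodes.isCut_cutLE (L.endpt true s)
  have hbal := hm.balanced_of_fits hC (L.fits_cutLT_cutLE hv) hs.1 true
  have hs_mem : s ∈ L.endpt true ⁻¹' L.nodes.cutLE (L.endpt true s) := L.nodes.mem_cutLE_self _
  obtain ⟨t, ht, heq⟩ := (L.isCut_preimage_endpt true hC).exists_eq_cutLE ⟨s, hs_mem⟩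
  rw [heq] at hbal hs_mem
  refine ⟨t, hs_mem.1.symm, hs_mem.2.lt_of_ne fun hpos => hs.2 ?_, ht.2, hbal⟩
  rwa [L.strips.eq_of_row_eq_of_pos_eq _ _ hs_mem.1 hpos]

lemma IsLeftCritical.exists_isWedge [Finite V] [Finite S] (hm : L.IsBendingMoment m)
    (hs : L.IsLeftCritical m s) (hv : L.endpt true s = .inl v) : ∃ t, L.IsWedge m s t := by
  obtain ⟨t₀, ht₀, hlt₀, hle₀, hbal₀⟩ := hs.exists_balanced_right hm hv
  obtain ⟨t, ⟨ht, hlt, hbal⟩, hmin⟩ := Set.exists_min_image {t | L.strips.row t = L.strips.row s ∧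
    L.strips.pos s < L.strips.pos t ∧ L.Balanced m (L.strips.cutLE t)} L.strips.pos
    (Set.toFinite _) ⟨t₀, ht₀, hlt₀, hbal₀⟩
  have htt₀ := hmin t₀ ⟨ht₀, hlt₀, hbal₀⟩
  have end_eq : L.endpt true t = L.endpt true s :=
    L.nodes.eq_of_row_eq_of_pos_eq _ _ (L.row_endpt_eq ht) <|
      ((L.pos_endpt_mono (ht.trans ht₀.symm) htt₀).trans hle₀).antisymm
        (L.pos_endpt_mono ht.symm hlt.le)
  refine ⟨t, ht.symm, hlt, hs.1, hbal, fun U hU hsU htU hbalU => ?_, ?_⟩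
  · obtain ⟨u, hu, rfl⟩ := hU.exists_eq_cutLE ⟨s, hsU⟩
    rcases hsU.2.lt_or_eq with hlt' | heq
    · exact (hmin u ⟨hU.1 u hu, hlt', hbalU⟩).not_gt (hU.pos_lt hu htU ht)
    · rw [← L.strips.eq_of_row_eq_of_pos_eq _ _ hsU.1 heq] at hbalU
      exact hs.2 hbalU
  · rw [L.terminal_eq _ _ _ hv, L.terminal_eq _ _ _ (end_eq.trans hv)]

lemma IsWedge.ne (h : L.IsWedge m s t) : s ≠ t :=
  fun hst => h.pos_lt.ne (congrArg _ hst)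

lemma IsWedge.not_balanced_preimage_endpt (h : L.IsWedge m s t) (hC : L.nodes.IsCut y C)
    (hs : L.endpt false s ∈ C) (ht : L.endpt false t ∉ C) :
    ¬ L.Balanced m (L.endpt false ⁻¹' C) := by
  have hU := L.isCut_preimage_endpt false hC
  rw [← hU.1 s hs] at hU
  exact h.not_balanced _ hU hs ht

lemma IsWedge.lower_ends_eq [Finite V] (hm : L.IsBendingMoment m) (h : L.IsWedge m s t)
    (hd : ∀ d e, L.endpt false s = .inr d → L.endpt false t ≠ .inr e) :
    L.endpt false s = L.endpt false t := by
  by_contra hne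
  have hlt := L.pos_endpt_lt h.row_eq h.pos_lt hne
  rcases hs : L.endpt false s with v | d
  · refine h.not_balanced_preimage_endpt (L.nodes.isCut_cutLE _) (L.nodes.mem_cutLE_self _)
      (fun ht => ht.2.not_gt hlt) ?_
    exact hm.balanced_of_fits (L.nodes.isCut_cutLE _) (L.fits_cutLT_cutLE hs) h.balanced_left false
  · rcases ht : L.endpt false t with w | e
    · refine h.not_balanced_preimage_endpt (L.nodes.isCut_cutLT _)
        ⟨L.row_endpt_eq h.row_eq, hlt⟩ (fun ht => ht.2.false) ?_
      exact hm.balanced_of_fits (L.nodes.isCut_cutLT _) (L.fits_cutLE_cutLT ht) h.balanced_right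
        false
    · exact hd d e hs ht

lemma IsWedge.strip_true [Finite V] {e : D} (hm : L.IsBendingMoment m)
    (h : L.IsWedge m (L.strip false d) (L.strip false e)) :
    L.IsWedge m (L.strip true d) (L.strip true e) where
  row_eq := L.row_strip_eq_row_strip h.row_eq
  pos_lt := (L.pos_strip_lt_iff (L.row_strip_eq_row_strip h.row_eq)).2 <|
    (L.pos_strip_lt_iff h.row_eq).1 h.pos_lt
  balanced_left := hm.balanced_cutLT_strip h.balanced_left true
  balanced_right := hm.balanced_cutLE_strip h.balanced_right true
  not_balanced U hU hd he hbal := by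
    have hfit := L.fits_shadow true hU
    have mem_iff (d : D) :
        L.strip true d ∈ U ↔ L.endpt false (L.strip false d) ∈ L.shadow true U := by
      rw [endpt_strip]
      exact Set.ext_iff.1 hfit d
    have hC := L.isCut_shadow true hU
    exact h.not_balanced_preimage_endpt hC ((mem_iff d).1 hd) (he ∘ (mem_iff e).2)
      (hm.balanced_of_fits hC hfit hbal false)
  top_eq := by rw [terminal_strip, terminal_strip, h.top_eq]

lemma not_isWedge [Finite V] [Finite S] (hm : L.IsBendingMoment m) (s t : S) :
    ¬ L.IsWedge m s t := by
  intro h₀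
  obtain ⟨⟨s, t⟩, h, hmin⟩ := Set.exists_min_image {p : S × S | L.IsWedge m p.1 p.2}
    (fun p => L.strips.row p.1) (Set.toFinite _) ⟨(s, t), h₀⟩
  by_cases hd : ∃ d e, L.endpt false s = .inr d ∧ L.endpt false t = .inr e
  · obtain ⟨d, e, hs, ht⟩ := hd
    obtain rfl := (L.endpt_eq_inr _ _ _).1 hs
    obtain rfl := (L.endpt_eq_inr _ _ _).1 ht
    have row_le := hmin (L.strip true d, L.strip true e) (h.strip_true hm)
    have row_true := L.row_strip true d
    rw [← L.row_strip false d, Bool.toInt_true, Bool.toInt_false] at row_true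
    dsimp only at row_le
    omega
  · push Not at hd
    have hend := h.lower_ends_eq hm hd
    rcases hs : L.endpt false s with v | d
    · refine h.ne (L.eq_of_terminal_eq s t h.row_eq fun b => ?_)
      cases b
      · rw [L.terminal_eq _ _ _ hs, L.terminal_eq _ _ _ (hend.symm.trans hs)]
      · exact h.top_eq
    · exact hd d d hs (hend.symm.trans hs)

theorem IsBendingMoment.balanced [Finite V] [Finite S] (hm : L.IsBendingMoment m)
    (hU : L.strips.IsCut y U) :
    L.Balanced m U := by
  by_contra hb
  obtain ⟨s, v, hs, hv⟩ := exists_isLeftCritical_endpt_eq_inl hm (exists_isLeftCritical hU hb)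
  obtain ⟨t, ht⟩ := hs.exists_isWedge hm hv
  exact not_isWedge hm s t ht

end BendingMoment

end LevelGraph

section LinearInequalities

theorem gordan {ι : Type*} [Fintype ι] (W : Submodule ℝ (ι → ℝ))
    (hW : ∀ w ∈ W, ¬ ∀ i, 0 < w i) :
    ∃ c : ι → ℝ, (∀ i, 0 ≤ c i) ∧ (∃ i, 0 < c i) ∧ ∀ w ∈ W, ∑ i, c i * w i = 0 := by
  classical
  let P : Set (ι → ℝ) := univ.pi fun _ => Ioi 0
  have hdisj : Disjoint P W :=
    disjoint_left.2 fun w hwP hwW => hW w hwW fun i => hwP i (mem_univ i)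
  obtain ⟨f, u, hfP, hfW⟩ := geometric_hahn_banach_open (convex_pi fun _ _ => convex_Ioi 0)
    (isOpen_set_pi finite_univ fun _ _ => isOpen_Ioi) W.convex hdisj
  have u_nonpos : u ≤ 0 := by simpa only [map_zero] using hfW 0 W.zero_mem
  have f_eq_zero : ∀ w ∈ W, f w = 0 := by
    intro w hw
    by_contra hne
    have h := hfW (((u - 1) / f w) • w) (W.smul_mem _ hw)
    rw [map_smul, smul_eq_mul, div_mul_cancel₀ _ hne] at h
    linarith
  have f_nonpos : ∀ w : ι → ℝ, 0 ≤ w → f w ≤ 0 := by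
    intro w hw
    have hmem : w ∈ closure P := by
      rw [closure_pi_set]
      exact fun i _ => closure_Ioi (0 : ℝ) ▸ hw i
    exact closure_minimal (fun w hw => ((hfP w hw).trans_le u_nonpos).le)
      (isClosed_le f.continuous continuous_const) hmem
  let c (i : ι) : ℝ := -f (fun j => if i = j then 1 else 0)
  have f_eq (w : ι → ℝ) : f w = -∑ i, c i * w i := by
    rw [← Finset.sum_neg_distrib]
    refine (LinearMap.pi_apply_eq_sum_univ f.toLinearMap w).trans
      (Finset.sum_congr rfl fun i _ => ?_)
    simp only [c, smul_eq_mul, neg_mul, neg_neg, mul_comm (w i)]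
    rfl
  have hc (i : ι) : 0 ≤ c i :=
    neg_nonneg.2 (f_nonpos _ fun j => by dsimp only [Pi.zero_apply]; split_ifs <;> norm_num)
  refine ⟨c, hc, ?_, fun w hw => neg_eq_zero.1 ((f_eq w).symm.trans (f_eq_zero w hw))⟩
  by_contra! hc'
  have f_one : f 1 < 0 := (hfP 1 fun _ _ => zero_lt_one' ℝ).trans_le u_nonpos
  simp [f_eq, fun i => (hc' i).antisymm (hc i)] at f_one

theorem motzkin_transposition {E ι κ : Type*} [AddCommGroup E] [Module ℝ E] [Fintype ι] [Fintype κ]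
    (φ : ι → E →ₗ[ℝ] ℝ) (ψ : κ → E →ₗ[ℝ] ℝ) (h : ¬ ∃ x, (∀ k, ψ k x = 0) ∧ ∀ i, 0 < φ i x) :
    ∃ (c : ι → ℝ) (μ : κ → ℝ), (∀ i, 0 ≤ c i) ∧ (∃ i, 0 < c i) ∧
      ∀ x, ∑ i, c i * φ i x = ∑ k, μ k * ψ k x := by
  let K : Submodule ℝ E := ⨅ k, (ψ k).ker
  have mem_K (x : E) : x ∈ K ↔ ∀ k, ψ k x = 0 := by
    simp only [K, Submodule.mem_iInf, LinearMap.mem_ker]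
  obtain ⟨c, hc, hpos, horth⟩ := gordan (K.map (LinearMap.pi φ)) (by
    rintro _ ⟨x, hx, rfl⟩ hφ
    exact h ⟨x, (mem_K x).1 hx, hφ⟩)
  have hmem : ∑ i, c i • φ i ∈ Submodule.span ℝ (range ψ) := by
    refine mem_span_of_iInf_ker_le_ker fun x hx => ?_
    simpa using horth _ (Submodule.mem_map_of_mem hx)
  obtain ⟨μ, hμ⟩ := (Submodule.mem_span_range_iff_exists_fun ℝ).1 hmem
  refine ⟨c, μ, hc, hpos, fun x => ?_⟩
  simpa using (congrArg (fun F => F x) hμ).symm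

theorem exists_int_forall_pos {V ι : Type*} [Finite V] [Finite ι] (φ : ι → (V → ℝ) →ₗ[ℝ] ℝ)
    (x : V → ℝ) (hx : ∀ i, 0 < φ i x) : ∃ z : V → ℤ, ∀ i, 0 < φ i (fun v => (z v : ℝ)) := by
  have hopen : IsOpen {w : V → ℝ | ∀ i, 0 < φ i w} := by
    rw [Set.ofPred_forall]
    exact isOpen_iInter_of_finite fun i =>
      isOpen_lt continuous_const (φ i).continuous_of_finiteDimensional
  obtain ⟨q, hq⟩ := (DenseRange.piMap fun _ : V => Rat.denseRange_cast (𝕜 := ℝ)).exists_mem_open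
    hopen ⟨x, hx⟩
  have := Fintype.ofFinite V
  let k : ℕ := ∏ v, (q v).den
  have hk : 0 < k := Finset.prod_pos fun v _ => (q v).den_pos
  have exists_int (v : V) : ∃ z : ℤ, (z : ℝ) = k * q v := by
    obtain ⟨c, hc⟩ : (q v).den ∣ k := Finset.dvd_prod_of_mem _ (Finset.mem_univ v)
    refine ⟨c * (q v).num, ?_⟩
    rw [hc, ← Rat.cast_natCast, ← Rat.cast_mul, ← Rat.cast_intCast, Rat.cast_inj]
    push_cast
    rw [← Rat.mul_den_eq_num (q v)]
    ring
  choose z hz using exists_int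
  have z_eq : (fun v => (z v : ℝ)) = (k : ℝ) • fun v => (q v : ℝ) := funext hz
  refine ⟨z, fun i => ?_⟩
  rw [z_eq, map_smul, smul_eq_mul]
  exact mul_pos (Nat.cast_pos.2 hk) (hq i)

end LinearInequalities

namespace LevelGraph

variable {V D S : Type*} (L : LevelGraph V D S)

lemma eq_of_endpt_eq {s t : S} (hrow : L.strips.row s = L.strips.row t)
    (h : ∀ b, L.endpt b s = L.endpt b t) : s = t := by
  by_cases hd : ∃ b d, L.endpt b s = .inr d
  · obtain ⟨b, d, hs⟩ := hd
    exact ((L.endpt_eq_inr b s d).1 hs).trans ((L.endpt_eq_inr b t d).1 ((h b).symm.trans hs)).symm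
  · refine L.eq_of_terminal_eq s t hrow fun b => ?_
    rcases hs : L.endpt b s with v | d
    · rw [L.terminal_eq b s v hs, L.terminal_eq b t v ((h b).symm.trans hs)]
    · exact absurd ⟨b, d, hs⟩ hd

lemma two_mul_moment_sub_sub [Fintype D] (m : D → ℝ) (C : Set (V ⊕ D)) :
    ∑ d, m d * (2 * C.indicator 1 (.inr d) - C.indicator 1 (L.endpt true (L.strip false d)) -
      C.indicator 1 (L.endpt false (L.strip true d))) =
    2 * moment m (Sum.inr ⁻¹' C) - moment m (L.strip false ⁻¹' (L.endpt true ⁻¹' C)) -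
      moment m (L.strip true ⁻¹' (L.endpt false ⁻¹' C)) := by
  classical
  simp only [moment, Finset.mul_sum, ← Finset.sum_sub_distrib]
  refine Finset.sum_congr rfl fun d _ => ?_
  simp only [indicator_apply, mem_preimage, Pi.one_apply]
  split_ifs <;> ring

lemma indicator_le_indicator_of_pos_lt {y : ℤ} {C : Set (V ⊕ D)} (hC : L.nodes.IsCut y C)
    {n n' : V ⊕ D} (hrow : L.nodes.row n = L.nodes.row n') (hpos : L.nodes.pos n < L.nodes.pos n') :
    C.indicator 1 n' ≤ C.indicator (1 : V ⊕ D → ℝ) n := by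
  by_cases h : n' ∈ C
  · rw [indicator_of_mem h, indicator_of_mem (hC.2 n' h n (hrow.trans (hC.1 n' h)) hpos.le)]
    rfl
  · rw [indicator_of_notMem h]
    exact indicator_nonneg (fun _ _ => zero_le_one' ℝ) n

theorem exists_straight [Finite V] [Finite D] [Finite S] : ∃ Z : V ⊕ D → ℝ,
    (∀ d, Z (L.endpt true (L.strip false d)) + Z (L.endpt false (L.strip true d)) =
      2 * Z (.inr d)) ∧
    ∀ n n', L.nodes.row n = L.nodes.row n' → L.nodes.pos n < L.nodes.pos n' → Z n < Z n' := by
  have := Fintype.ofFinite D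
  let ι := {p : (V ⊕ D) × (V ⊕ D) //
    L.nodes.row p.1 = L.nodes.row p.2 ∧ L.nodes.pos p.1 < L.nodes.pos p.2}
  have := Fintype.ofFinite ι
  let coord (n : V ⊕ D) : (V ⊕ D → ℝ) →ₗ[ℝ] ℝ := LinearMap.proj n
  let gap (p : ι) := coord p.1.2 - coord p.1.1
  let bend (d : D) := (2 : ℝ) • coord (.inr d) - coord (L.endpt true (L.strip false d)) -
    coord (L.endpt false (L.strip true d))
  by_contra hstraight
  obtain ⟨c, m, hc, ⟨p, hp⟩, hcm⟩ := motzkin_transposition gap bend (by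
    rintro ⟨Z, hbend, hgap⟩
    refine hstraight ⟨Z, fun d => ?_, fun n n' h h' => sub_pos.1 (hgap ⟨(n, n'), h, h'⟩)⟩
    linarith [show 2 * Z (.inr d) - Z (L.endpt true (L.strip false d)) -
      Z (L.endpt false (L.strip true d)) = 0 from hbend d])
  have eval_cut (C : Set (V ⊕ D)) :=
    (hcm (C.indicator 1)).trans (L.two_mul_moment_sub_sub m C)
  have term_nonpos {y : ℤ} {C : Set (V ⊕ D)} (hC : L.nodes.IsCut y C) (p : ι) :
      c p * gap p (C.indicator 1) ≤ 0 :=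
    mul_nonpos_of_nonneg_of_nonpos (hc p) <|
      sub_nonpos.2 (L.indicator_le_indicator_of_pos_lt hC p.2.1 p.2.2)
  have hm : L.IsBendingMoment m := fun y C hC => by
    linarith [eval_cut C, Finset.sum_nonpos fun p (_ : p ∈ Finset.univ) => term_nonpos hC p]
  let C := L.nodes.cutLE p.1.1
  have hC := L.nodes.isCut_cutLE p.1.1
  have balanced (b) := hm.balanced (L.isCut_preimage_endpt b hC)
  have sum_neg : ∑ p, c p * gap p (C.indicator 1) < 0 := by
    refine Finset.sum_neg' (fun p _ => term_nonpos hC p) ⟨p, Finset.mem_univ p, ?_⟩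
    have gap_eq : gap p (C.indicator 1) = C.indicator 1 p.1.2 - C.indicator 1 p.1.1 := rfl
    rw [gap_eq, indicator_of_mem (L.nodes.mem_cutLE_self _),
      indicator_of_notMem fun h => h.2.not_gt p.2.2]
    simpa using hp
  have moment_cut := balanced true true
  rw [preimage_strip_preimage_endpt] at moment_cut
  rw [eval_cut C, moment_cut, balanced true false, balanced false true] at sum_neg
  simp at sum_neg

end LevelGraph

lemma inter_nonempty_of_ordConnected {I J : Set ℝ} (hI : I.OrdConnected) (hJ : J.OrdConnected)
    {a a' b b' : ℝ} (ha : a ∈ I) (ha' : a' ∈ I) (hb : b ∈ J) (hb' : b' ∈ J) (hab : a ≤ b)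
    (hba : b' ≤ a') : (I ∩ J).Nonempty := by
  rcases le_total b a' with h | h
  · exact ⟨b, hI.out ha ha' ⟨hab, h⟩, hb⟩
  · exact ⟨a', ha', hJ.out hb' hb ⟨hba, h⟩⟩

lemma exists_lineMap_eq_lineMap {a a' b b' : ℝ} (h : (a - b) * (a' - b') < 0) :
    ∃ τ ∈ Ioo (0 : ℝ) 1, AffineMap.lineMap a a' τ = AffineMap.lineMap b b' τ := by
  have hne : (a - b) - (a' - b') ≠ 0 := by
    intro h0
    rw [sub_eq_zero.1 h0] at h
    exact (mul_self_nonneg _).not_gt h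
  refine ⟨(a - b) / ((a - b) - (a' - b')), ?_, ?_⟩
  · rcases mul_neg_iff.1 h with ⟨h₁, h₂⟩ | ⟨h₁, h₂⟩
    · exact ⟨div_pos h₁ (by linarith), (div_lt_one (by linarith)).2 (by linarith)⟩
    · exact ⟨div_pos_of_neg_of_neg h₁ (by linarith),
        (div_lt_one_of_neg (by linarith)).2 (by linarith)⟩
  · rw [AffineMap.lineMap_apply_ring', AffineMap.lineMap_apply_ring']
    field_simp
    ring

lemma eq_lineMap_of_second_difference_eq_zero {f : ℤ → ℝ} {a b : ℤ} (hab : a < b)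
    (h : ∀ y ∈ Ioo a b, f (y + 1) + f (y - 1) = 2 * f y) {y : ℤ} (hy : y ∈ Icc a b) :
    f y = AffineMap.lineMap (f a) (f b) ((y - a : ℝ) / (b - a)) := by
  have slope (y : ℤ) (hay : a ≤ y) : y < b → f (y + 1) - f y = f (a + 1) - f a := by
    induction y, hay using Int.leInduction with
    | base => exact fun _ => rfl
    | succ y hay ih =>
      intro hyb
      have := h (y + 1) ⟨by omega, hyb⟩
      rw [add_sub_cancel_right] at this
      linarith [ih (by omega)]
  have affine (y : ℤ) (hay : a ≤ y) : y ≤ b → f y = f a + (y - a) * (f (a + 1) - f a) := by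
    induction y, hay using Int.leInduction with
    | base => intro _; ring
    | succ y hay ih =>
      intro hyb
      push_cast
      linarith [ih (by omega), slope y hay (by omega)]
  have hne : (b - a : ℝ) ≠ 0 := sub_ne_zero.2 (Int.cast_injective.ne hab.ne')
  rw [AffineMap.lineMap_apply_ring', affine y hy.1 hy.2, affine b hab.le le_rfl]
  field_simp
  ring

/-- The curves of a y-monotone drawing, as point sets: the vertex `v` is the point `(x v, row v)`,
and every edge meets each horizontal line in an interval and each strip between consecutive rows
that it traverses in a segment. -/
structure MonotoneCurves {V : Type*} (G : SimpleGraph V) where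
  row : V → ℤ
  x : V → ℝ
  curve : Sym2 V → Set Pt
  eq_of_row_eq_of_x_eq : ∀ u v, row u = row v → x u = x v → u = v
  ordConnected_slice : ∀ a ∈ G.edgeSet, ∀ c : ℝ, {z | (z, c) ∈ curve a}.OrdConnected
  vertex_mem_curve_iff : ∀ a ∈ G.edgeSet, ∀ v, (x v, (row v : ℝ)) ∈ curve a ↔ v ∈ a
  exists_vertex_eq : ∀ a ∈ G.edgeSet, ∀ b ∈ G.edgeSet, a ≠ b → ∀ p ∈ curve a, p ∈ curve b →
    ∃ v, v ∈ a ∧ v ∈ b ∧ (x v, (row v : ℝ)) = p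
  exists_segment_subset : ∀ u v, G.Adj u v → ∀ y : ℤ, row u ≤ y → y < row v →
    ∃ c : Bool → ℝ, segment ℝ (c false, (y : ℝ)) (c true, (y : ℝ) + 1) ⊆ curve s(u, v)

namespace MonotoneCurves

variable {V : Type*} {G : SimpleGraph V} (Γ : MonotoneCurves G)

/-- A non-horizontal edge, directed upwards. -/
@[ext]
structure UpEdge where
  bot : V
  top : V
  adj : G.Adj bot top
  row_lt : Γ.row bot < Γ.row top

/-- The pieces of the non-horizontal edges between consecutive rows; the second component is the
lower one of the two rows. -/
abbrev Strip : Type _ := Σ e : Γ.UpEdge, Ico (Γ.row e.bot) (Γ.row e.top)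

/-- The crossings of the non-horizontal edges with the rows strictly between their ends. -/
abbrev Dummy : Type _ := Σ e : Γ.UpEdge, Ioo (Γ.row e.bot) (Γ.row e.top)

variable {Γ}

instance [Finite V] : Finite Γ.UpEdge :=
  Finite.of_injective (fun e => (e.bot, e.top)) fun _ _ h =>
    UpEdge.ext (congrArg Prod.fst h) (congrArg Prod.snd h)

namespace UpEdge

/-- The underlying undirected edge. -/
def edge (e : Γ.UpEdge) : Sym2 V := s(e.bot, e.top)

lemma edge_mem (e : Γ.UpEdge) : e.edge ∈ G.edgeSet := e.adj

lemma edge_injective : Function.Injective (edge : Γ.UpEdge → Sym2 V) := by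
  intro e f h
  rcases Sym2.eq_iff.1 h with ⟨hb, ht⟩ | ⟨hb, ht⟩
  · exact UpEdge.ext hb ht
  · have he := e.row_lt
    rw [hb, ht] at he
    exact absurd he f.row_lt.not_gt

lemma row_notMem_Ioo {e : Γ.UpEdge} {v : V} (hv : v ∈ e.edge) :
    Γ.row v ∉ Ioo (Γ.row e.bot) (Γ.row e.top) := by
  rcases Sym2.mem_iff.1 hv with rfl | rfl
  · exact fun h => h.1.false
  · exact fun h => h.2.false

/-- The node at which an edge meets the row `y`, provided it reaches that row. -/
noncomputable def nodeAt (e : Γ.UpEdge) (y : ℤ) : V ⊕ Γ.Dummy :=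
  if h : y ∈ Ioo (Γ.row e.bot) (Γ.row e.top) then .inr ⟨e, y, h⟩
  else if y ≤ Γ.row e.bot then .inl e.bot else .inl e.top

lemma nodeAt_of_mem_Ioo {e : Γ.UpEdge} {y : ℤ} (h : y ∈ Ioo (Γ.row e.bot) (Γ.row e.top)) :
    e.nodeAt y = .inr ⟨e, y, h⟩ :=
  dif_pos h

lemma nodeAt_row {e : Γ.UpEdge} {v : V} (hv : v ∈ e.edge) : e.nodeAt (Γ.row v) = .inl v := by
  rw [nodeAt, dif_neg (row_notMem_Ioo hv)]
  rcases Sym2.mem_iff.1 hv with rfl | rfl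
  · exact if_pos le_rfl
  · exact if_neg e.row_lt.not_ge

lemma mem_Icc_cases {e : Γ.UpEdge} {y : ℤ} (h : y ∈ Icc (Γ.row e.bot) (Γ.row e.top)) :
    y ∈ Ioo (Γ.row e.bot) (Γ.row e.top) ∨ ∃ v ∈ e.edge, Γ.row v = y := by
  rcases h.1.eq_or_lt with hb | hb
  · exact .inr ⟨_, Sym2.mem_mk_left _ _, hb⟩
  · rcases h.2.eq_or_lt with ht | ht
    · exact .inr ⟨_, Sym2.mem_mk_right _ _, ht.symm⟩
    · exact .inl ⟨hb, ht⟩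

lemma nodeAt_eq_inr_iff {e : Γ.UpEdge} {y : ℤ} {d : Γ.Dummy} :
    e.nodeAt y = .inr d ↔ e = d.1 ∧ y = d.2 := by
  constructor
  · intro h
    rw [nodeAt] at h
    split_ifs at h
    obtain rfl := Sum.inr_injective h
    exact ⟨rfl, rfl⟩
  · obtain ⟨e, y, hy⟩ := d
    rintro ⟨rfl, rfl⟩
    exact nodeAt_of_mem_Ioo hy

lemma mem_edge_of_nodeAt_eq_inl {e : Γ.UpEdge} {y : ℤ} {v : V}
    (hy : y ∈ Icc (Γ.row e.bot) (Γ.row e.top)) (h : e.nodeAt y = .inl v) :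
    v ∈ e.edge ∧ Γ.row v = y := by
  rcases mem_Icc_cases hy with hy | ⟨w, hw, rfl⟩
  · rw [nodeAt_of_mem_Ioo hy] at h
    exact absurd h Sum.inr_ne_inl
  · rw [nodeAt_row hw] at h
    obtain rfl := Sum.inl_injective h
    exact ⟨hw, rfl⟩

end UpEdge

/-- The horizontal positions of the two ends of a strip. -/
noncomputable def stripX (s : Γ.Strip) : Bool → ℝ :=
  (Γ.exists_segment_subset _ _ s.1.adj s.2 s.2.2.1 s.2.2.2).choose

lemma segment_stripX_subset (s : Γ.Strip) :
    segment ℝ (stripX s false, ((s.2 : ℤ) : ℝ)) (stripX s true, ((s.2 : ℤ) : ℝ) + 1) ⊆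
      Γ.curve s.1.edge :=
  (Γ.exists_segment_subset _ _ s.1.adj s.2 s.2.2.1 s.2.2.2).choose_spec

lemma lineMap_stripX_mem (s : Γ.Strip) {τ : ℝ} (hτ : τ ∈ Icc (0 : ℝ) 1) :
    (AffineMap.lineMap (stripX s false) (stripX s true) τ, ((s.2 : ℤ) : ℝ) + τ) ∈
      Γ.curve s.1.edge := by
  refine segment_stripX_subset s ?_
  rw [segment_eq_image_lineMap]
  refine ⟨τ, hτ, Prod.ext ?_ ?_⟩
  · exact AffineMap.fst_lineMap _ _ _
  · simp [AffineMap.lineMap_apply, add_comm]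

lemma stripX_mem (s : Γ.Strip) (b : Bool) :
    (stripX s b, (((s.2 : ℤ) + b.toInt : ℤ) : ℝ)) ∈ Γ.curve s.1.edge := by
  cases b
  · simpa using lineMap_stripX_mem s (left_mem_Icc.2 zero_le_one)
  · simpa using lineMap_stripX_mem s (right_mem_Icc.2 zero_le_one)

/-- The strip starting at a dummy. -/
def stripAbove (d : Γ.Dummy) : Γ.Strip := ⟨d.1, d.2, Ioo_subset_Ico_self d.2.2⟩

/-- The row of a node. -/
def nodeRow : V ⊕ Γ.Dummy → ℤ := Sum.elim Γ.row fun d => d.2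

/-- The horizontal position of a node; an edge may meet the row of a dummy in a whole segment, from
which we pick the end at which the edge leaves the row upwards. -/
noncomputable def nodePos : V ⊕ Γ.Dummy → ℝ := Sum.elim Γ.x fun d => stripX (stripAbove d) false

lemma dummy_mem_curve (d : Γ.Dummy) :
    (nodePos (.inr d), ((d.2 : ℤ) : ℝ)) ∈ Γ.curve d.1.edge := by
  have h := stripX_mem (stripAbove d) false
  rwa [Bool.toInt_false, add_zero] at h

lemma nodeRow_nodeAt {e : Γ.UpEdge} {y : ℤ} (h : y ∈ Icc (Γ.row e.bot) (Γ.row e.top)) :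
    nodeRow (e.nodeAt y) = y := by
  rcases UpEdge.mem_Icc_cases h with hy | ⟨v, hv, rfl⟩
  · rw [UpEdge.nodeAt_of_mem_Ioo hy]; rfl
  · rw [UpEdge.nodeAt_row hv]; rfl

lemma nodePos_nodeAt_mem {e : Γ.UpEdge} {y : ℤ} (h : y ∈ Icc (Γ.row e.bot) (Γ.row e.top)) :
    (nodePos (e.nodeAt y), (y : ℝ)) ∈ Γ.curve e.edge := by
  rcases UpEdge.mem_Icc_cases h with hy | ⟨v, hv, rfl⟩
  · rw [UpEdge.nodeAt_of_mem_Ioo hy]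
    exact dummy_mem_curve ⟨e, y, hy⟩
  · rw [UpEdge.nodeAt_row hv]
    exact (Γ.vertex_mem_curve_iff _ e.edge_mem v).2 hv

lemma exists_vertex_of_mem_curve_inter {a b : Sym2 V} (ha : a ∈ G.edgeSet) (hb : b ∈ G.edgeSet)
    (hab : a ≠ b) {z : ℝ} {y : ℤ} (hza : (z, (y : ℝ)) ∈ Γ.curve a)
    (hzb : (z, (y : ℝ)) ∈ Γ.curve b) : ∃ v, v ∈ a ∧ v ∈ b ∧ Γ.x v = z ∧ Γ.row v = y := by
  obtain ⟨v, hva, hvb, hv⟩ := Γ.exists_vertex_eq a ha b hb hab _ hza hzb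
  exact ⟨v, hva, hvb, congrArg Prod.fst hv, Int.cast_injective (congrArg Prod.snd hv)⟩

lemma node_eq_of_row_eq_of_pos_eq (n n' : V ⊕ Γ.Dummy) (hrow : nodeRow n = nodeRow n')
    (hpos : nodePos n = nodePos n') : n = n' := by
  have vertex_ne_dummy (v : V) (d : Γ.Dummy) (hr : Γ.row v = d.2)
      (hp : Γ.x v = nodePos (.inr d)) : False := by
    have hmem := dummy_mem_curve d
    rw [← hp, ← hr, Γ.vertex_mem_curve_iff _ d.1.edge_mem] at hmem
    exact UpEdge.row_notMem_Ioo hmem (hr ▸ d.2.2)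
  rcases n with v | d <;> rcases n' with v' | d'
  · exact congrArg _ (Γ.eq_of_row_eq_of_x_eq v v' hrow hpos)
  · exact (vertex_ne_dummy v d' hrow hpos).elim
  · exact (vertex_ne_dummy v' d hrow.symm hpos.symm).elim
  · refine congrArg _ (Sigma.subtype_ext (by_contra fun hne => ?_) hrow)
    have hmem := dummy_mem_curve d'
    rw [← hpos, ← show (d.2 : ℤ) = d'.2 from hrow] at hmem
    obtain ⟨v, hv, -, -, hr⟩ := exists_vertex_of_mem_curve_inter d.1.edge_mem d'.1.edge_mem
      (UpEdge.edge_injective.ne hne) (dummy_mem_curve d) hmem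
    exact UpEdge.row_notMem_Ioo hv (hr ▸ d.2.2)

variable (Γ) in
/-- The nodes of a drawing, in their left-to-right order in each row. -/
noncomputable def nodes : RowArrangement (V ⊕ Γ.Dummy) where
  row := nodeRow
  pos := nodePos
  eq_of_row_eq_of_pos_eq := node_eq_of_row_eq_of_pos_eq

lemma lineMap_stripX_ne {s t : Γ.Strip} (hrow : (s.2 : ℤ) = t.2) (hne : s ≠ t) {τ : ℝ}
    (hτ : τ ∈ Ioo (0 : ℝ) 1) :
    AffineMap.lineMap (stripX s false) (stripX s true) τ ≠
      AffineMap.lineMap (stripX t false) (stripX t true) τ := by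
  intro heq
  have hs := lineMap_stripX_mem s (Ioo_subset_Icc_self hτ)
  have ht := lineMap_stripX_mem t (Ioo_subset_Icc_self hτ)
  rw [heq, hrow] at hs
  have edge_ne : s.1.edge ≠ t.1.edge :=
    UpEdge.edge_injective.ne fun h => hne (Sigma.subtype_ext h hrow)
  obtain ⟨v, -, -, hv⟩ := Γ.exists_vertex_eq _ s.1.edge_mem _ t.1.edge_mem edge_ne _ hs ht
  have row_eq : (Γ.row v : ℝ) = (t.2 : ℤ) + τ := congrArg Prod.snd hv
  have h₁ : (t.2 : ℤ) < Γ.row v := by rify; linarith [hτ.1]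
  have h₂ : Γ.row v < (t.2 : ℤ) + 1 := by rify; linarith [hτ.2]
  omega

variable (Γ) in
/-- The strips of a drawing, in their left-to-right order halfway between the rows. -/
noncomputable def strips : RowArrangement Γ.Strip where
  row s := s.2
  pos s := AffineMap.lineMap (stripX s false) (stripX s true) (1 / 2 : ℝ)
  eq_of_row_eq_of_pos_eq _ _ hrow hpos := by_contra fun hne =>
    lineMap_stripX_ne hrow hne (by norm_num) hpos

lemma stripX_le_stripX {s t : Γ.Strip} (hrow : (s.2 : ℤ) = t.2)
    (hst : Γ.strips.pos s < Γ.strips.pos t) (b : Bool) : stripX s b ≤ stripX t b := by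
  by_contra! hlt
  have hmid : stripX s false + stripX s true < stripX t false + stripX t true := by
    simp only [strips, AffineMap.lineMap_apply_ring'] at hst
    linarith
  have hmul : (stripX s false - stripX t false) * (stripX s true - stripX t true) < 0 := by
    cases b
    · exact mul_neg_of_pos_of_neg (sub_pos.2 hlt) (by linarith)
    · exact mul_neg_of_neg_of_pos (by linarith) (sub_pos.2 hlt)
  obtain ⟨τ, hτ, heq⟩ := exists_lineMap_eq_lineMap hmul
  exact lineMap_stripX_ne hrow (fun h => hst.ne (congrArg _ h)) hτ heq

lemma nodePos_nodeAt_le {e f : Γ.UpEdge} {y : ℤ} (he : y ∈ Icc (Γ.row e.bot) (Γ.row e.top))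
    (hf : y ∈ Icc (Γ.row f.bot) (Γ.row f.top)) {z w : ℝ} (hz : (z, (y : ℝ)) ∈ Γ.curve e.edge)
    (hw : (w, (y : ℝ)) ∈ Γ.curve f.edge) (hzw : z ≤ w) :
    nodePos (e.nodeAt y) ≤ nodePos (f.nodeAt y) := by
  by_contra! hlt
  obtain ⟨r, hre, hrf⟩ := inter_nonempty_of_ordConnected
    (Γ.ordConnected_slice _ e.edge_mem y) (Γ.ordConnected_slice _ f.edge_mem y) hz
    (nodePos_nodeAt_mem he) hw (nodePos_nodeAt_mem hf) hzw hlt.le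
  have edge_ne : e.edge ≠ f.edge := by
    intro h
    rw [UpEdge.edge_injective h] at hlt
    exact hlt.false
  obtain ⟨v, hve, hvf, -, rfl⟩ := exists_vertex_of_mem_curve_inter e.edge_mem f.edge_mem edge_ne
    hre hrf
  rw [UpEdge.nodeAt_row hve, UpEdge.nodeAt_row hvf] at hlt
  exact hlt.false

lemma end_row_mem_Icc (s : Γ.Strip) (b : Bool) :
    (s.2 : ℤ) + b.toInt ∈ Icc (Γ.row s.1.bot) (Γ.row s.1.top) := by
  have h₁ := s.2.2.1
  have h₂ := s.2.2.2
  cases b <;> constructor <;> simp only [Bool.toInt_false, Bool.toInt_true] <;> omega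

variable (Γ) in
/-- The skeleton of a drawing. -/
noncomputable def levelGraph : LevelGraph V Γ.Dummy Γ.Strip where
  nodes := Γ.nodes
  strips := Γ.strips
  endpt b s := s.1.nodeAt (s.2 + b.toInt)
  row_endpt b s := nodeRow_nodeAt (end_row_mem_Icc s b)
  pos_endpt_le b s t hrow hst := by
    have hrow : (s.2 : ℤ) = t.2 := hrow
    have hs := end_row_mem_Icc s b
    have hs_mem := stripX_mem s b
    rw [hrow] at hs hs_mem ⊢
    exact nodePos_nodeAt_le hs (end_row_mem_Icc t b) hs_mem (stripX_mem t b)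
      (stripX_le_stripX hrow hst b)
  strip b d := ⟨d.1, d.2 - b.toInt, by
    have h₁ := d.2.2.1
    have h₂ := d.2.2.2
    cases b <;> constructor <;> simp only [Bool.toInt_false, Bool.toInt_true] <;> omega⟩
  endpt_eq_inr b s d := by
    rw [UpEdge.nodeAt_eq_inr_iff, ← eq_sub_iff_add_eq]
    exact ⟨fun h => Sigma.subtype_ext h.1 h.2, by rintro rfl; exact ⟨rfl, rfl⟩⟩
  terminal b s := bif b then s.1.top else s.1.bot
  terminal_eq b s v h := by
    obtain ⟨hv, hrow⟩ := UpEdge.mem_edge_of_nodeAt_eq_inl (end_row_mem_Icc s b) h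
    have h₁ := s.2.2.1
    have h₂ := s.2.2.2
    rcases Sym2.mem_iff.1 hv with rfl | rfl <;> cases b <;>
      simp only [Bool.toInt_false, Bool.toInt_true] at hrow <;> first | rfl | omega
  terminal_strip _ _ := rfl
  eq_of_terminal_eq _ _ hrow h := Sigma.subtype_ext (UpEdge.ext (h false) (h true)) hrow

/-- The horizontal position at height `c` of the straight line through the ends of `e`, when the
vertices are placed at the positions `x` in their rows. -/
noncomputable def UpEdge.lineX (e : Γ.UpEdge) (x : V → ℝ) (c : ℝ) : ℝ :=
  AffineMap.lineMap (x e.bot) (x e.top) ((c - Γ.row e.bot) / (Γ.row e.top - Γ.row e.bot))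

/-- The horizontal positions of the nodes when the edges are drawn as straight segments between
vertices placed at the positions `x` in their rows. -/
noncomputable def straightPos (x : V → ℝ) : V ⊕ Γ.Dummy → ℝ :=
  Sum.elim x fun d => d.1.lineX x (d.2 : ℤ)

variable (Γ) in
/-- Vertex positions for which drawing the edges straight preserves the order of all nodes. -/
def IsStraightening (x : V → ℝ) : Prop :=
  ∀ n n' : V ⊕ Γ.Dummy, nodeRow n = nodeRow n' → nodePos n < nodePos n' →
    straightPos x n < straightPos x n'

lemma UpEdge.lineX_row {e : Γ.UpEdge} {v : V} (hv : v ∈ e.edge) (x : V → ℝ) :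
    e.lineX x (Γ.row v) = x v := by
  rcases Sym2.mem_iff.1 hv with rfl | rfl
  · rw [lineX, sub_self, zero_div, AffineMap.lineMap_apply_zero]
  · rw [lineX, div_self (sub_ne_zero.2 (Int.cast_injective.ne e.row_lt.ne')),
      AffineMap.lineMap_apply_one]

lemma straightPos_nodeAt (x : V → ℝ) {e : Γ.UpEdge} {y : ℤ}
    (h : y ∈ Icc (Γ.row e.bot) (Γ.row e.top)) :
    straightPos x (e.nodeAt y) = e.lineX x y := by
  rcases UpEdge.mem_Icc_cases h with hy | ⟨v, hv, rfl⟩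
  · rw [UpEdge.nodeAt_of_mem_Ioo hy]; rfl
  · rw [UpEdge.nodeAt_row hv, UpEdge.lineX_row hv]; rfl

lemma exists_linearMap_eq_straightPos (n : V ⊕ Γ.Dummy) :
    ∃ φ : (V → ℝ) →ₗ[ℝ] ℝ, ∀ x, φ x = straightPos x n := by
  rcases n with v | ⟨e, y⟩
  · exact ⟨LinearMap.proj v, fun x => rfl⟩
  · let c : ℝ := ((y : ℤ) - Γ.row e.bot) / (Γ.row e.top - Γ.row e.bot)
    exact ⟨AffineMap.lineMap (LinearMap.proj e.bot) (LinearMap.proj e.top) c,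
      fun x => by simp [straightPos, UpEdge.lineX, AffineMap.lineMap_apply, c]⟩

theorem exists_isStraightening [Finite V] : ∃ x, Γ.IsStraightening x := by
  obtain ⟨Z, hbend, hmono⟩ := Γ.levelGraph.exists_straight
  have bend (e : Γ.UpEdge) (y : ℤ) (hy : y ∈ Ioo (Γ.row e.bot) (Γ.row e.top)) :
      Z (e.nodeAt (y + 1)) + Z (e.nodeAt (y - 1)) = 2 * Z (e.nodeAt y) := by
    have h := hbend ⟨e, y, hy⟩
    simp only [levelGraph, Bool.toInt_false, Bool.toInt_true, sub_zero, add_zero] at h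
    rwa [UpEdge.nodeAt_of_mem_Ioo hy]
  have Z_eq (n : V ⊕ Γ.Dummy) : Z n = straightPos (Z ∘ Sum.inl) n := by
    rcases n with v | ⟨e, y, hy⟩
    · rfl
    · have h := eq_lineMap_of_second_difference_eq_zero (f := fun y => Z (e.nodeAt y)) e.row_lt
        (bend e) (Ioo_subset_Icc_self hy)
      simp only [UpEdge.nodeAt_of_mem_Ioo hy, UpEdge.nodeAt_row (Sym2.mem_mk_left _ _),
        UpEdge.nodeAt_row (Sym2.mem_mk_right _ _)] at h
      exact h
  exact ⟨Z ∘ Sum.inl, fun n n' hrow hpos => by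
    rw [← Z_eq, ← Z_eq]
    exact hmono n n' hrow hpos⟩

theorem exists_int_isStraightening [Finite V] :
    ∃ x : V → ℤ, Γ.IsStraightening fun v => (x v : ℝ) := by
  obtain ⟨x, hx⟩ := Γ.exists_isStraightening
  choose φ hφ using exists_linearMap_eq_straightPos (Γ := Γ)
  let ι := {p : (V ⊕ Γ.Dummy) × (V ⊕ Γ.Dummy) //
    nodeRow p.1 = nodeRow p.2 ∧ nodePos p.1 < nodePos p.2}
  obtain ⟨z, hz⟩ := exists_int_forall_pos (fun p : ι => φ p.1.2 - φ p.1.1) x fun p => by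
    rw [LinearMap.sub_apply, hφ, hφ, sub_pos]
    exact hx _ _ p.2.1 p.2.2
  refine ⟨z, fun n n' hrow hpos => ?_⟩
  have h := hz ⟨(n, n'), hrow, hpos⟩
  rwa [LinearMap.sub_apply, hφ, hφ, sub_pos] at h

end MonotoneCurves

/-- A drawing of `G` with the vertices at `p` and the edges drawn as the point sets `curve` has no
crossings. The curves themselves are not required to be simple. -/
structure IsCrossingFree {V : Type*} (G : SimpleGraph V) (p : V → Pt) (curve : Sym2 V → Set Pt) :
    Prop where
  injective : Function.Injective p
  mem_of_mem_curve : ∀ a ∈ G.edgeSet, ∀ v, p v ∈ curve a → v ∈ a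
  exists_vertex_eq : ∀ a ∈ G.edgeSet, ∀ b ∈ G.edgeSet, a ≠ b → ∀ r ∈ curve a, r ∈ curve b →
    ∃ v, v ∈ a ∧ v ∈ b ∧ p v = r

/-- The straight segment joining the two ends of an edge, when the vertices are placed at `p`. -/
def edgeSegment {V : Type*} (p : V → Pt) : Sym2 V → Set Pt :=
  Sym2.lift ⟨fun u v => segment ℝ (p u) (p v), fun _ _ => segment_symm _ _ _⟩

lemma mem_segment_iff_of_snd_lt {p q r : Pt} (h : p.2 < q.2) :
    r ∈ segment ℝ p q ↔ r.2 ∈ Icc p.2 q.2 ∧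
      r.1 = AffineMap.lineMap p.1 q.1 ((r.2 - p.2) / (q.2 - p.2)) := by
  have hpos : 0 < q.2 - p.2 := sub_pos.2 h
  rw [segment_eq_image_lineMap, mem_image]
  constructor
  · rintro ⟨τ, hτ, rfl⟩
    have hsnd : (AffineMap.lineMap p q τ : Pt).2 = τ * (q.2 - p.2) + p.2 := by
      rw [AffineMap.snd_lineMap, AffineMap.lineMap_apply_ring']
    rw [hsnd, add_sub_cancel_right, mul_div_cancel_right₀ _ hpos.ne', AffineMap.fst_lineMap]
    exact ⟨⟨by nlinarith [hτ.1], by nlinarith [hτ.2]⟩, rfl⟩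
  · rintro ⟨hr, hfst⟩
    refine ⟨(r.2 - p.2) / (q.2 - p.2), ⟨div_nonneg (sub_nonneg.2 hr.1) hpos.le,
      (div_le_one hpos).2 (sub_le_sub_right hr.2 _)⟩, Prod.ext ?_ ?_⟩
    · rw [AffineMap.fst_lineMap, hfst]
    · rw [AffineMap.snd_lineMap, AffineMap.lineMap_apply_ring', div_mul_cancel₀ _ hpos.ne',
        sub_add_cancel]

lemma mem_segment_iff_of_snd_eq {p q r : Pt} (h : p.2 = q.2) (hle : p.1 ≤ q.1) :
    r ∈ segment ℝ p q ↔ r.2 = p.2 ∧ r.1 ∈ Icc p.1 q.1 := by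
  obtain ⟨a, c⟩ := p
  obtain ⟨b, c'⟩ := q
  obtain rfl : c = c' := h
  rw [← Prod.image_mk_segment_left, segment_eq_Icc hle]
  exact ⟨by rintro ⟨z, hz, rfl⟩; exact ⟨rfl, hz⟩, fun hr => ⟨r.1, hr.2, Prod.ext rfl hr.1.symm⟩⟩

namespace MonotoneCurves

variable {V : Type*} {G : SimpleGraph V} {Γ : MonotoneCurves G}

variable (Γ) in
/-- The points of the vertices placed at the horizontal positions `x` in their rows. -/
def place (x : V → ℝ) (v : V) : Pt := (x v, Γ.row v)

lemma eq_edge_or_eq_flat {a : Sym2 V} (ha : a ∈ G.edgeSet) :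
    (∃ e : Γ.UpEdge, a = e.edge) ∨
      ∃ u v, a = s(u, v) ∧ Γ.row u = Γ.row v ∧ Γ.x u < Γ.x v := by
  induction a with | _ u v
  have hadj : G.Adj u v := ha
  rcases lt_trichotomy (Γ.row u) (Γ.row v) with h | h | h
  · exact .inl ⟨⟨u, v, hadj, h⟩, rfl⟩
  · rcases lt_trichotomy (Γ.x u) (Γ.x v) with hx | hx | hx
    · exact .inr ⟨u, v, rfl, h, hx⟩
    · exact absurd (Γ.eq_of_row_eq_of_x_eq u v h hx) hadj.ne
    · exact .inr ⟨v, u, Sym2.eq_swap, h.symm, hx⟩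
  · exact .inl ⟨⟨v, u, hadj.symm, h⟩, Sym2.eq_swap⟩

lemma mem_edgeSegment_edge {e : Γ.UpEdge} {x : V → ℝ} {r : Pt} :
    r ∈ edgeSegment (Γ.place x) e.edge ↔
      r.2 ∈ Icc (Γ.row e.bot : ℝ) (Γ.row e.top) ∧ r.1 = e.lineX x r.2 :=
  mem_segment_iff_of_snd_lt (Int.cast_lt.2 e.row_lt)

lemma exists_nodeAt_of_mem_edgeSegment {e : Γ.UpEdge} {x : V → ℝ} {z : ℝ} {y : ℤ}
    (h : (z, (y : ℝ)) ∈ edgeSegment (Γ.place x) e.edge) :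
    y ∈ Icc (Γ.row e.bot) (Γ.row e.top) ∧ straightPos x (e.nodeAt y) = z := by
  obtain ⟨hy, hz⟩ := mem_edgeSegment_edge.1 h
  have hy' : y ∈ Icc (Γ.row e.bot) (Γ.row e.top) := ⟨Int.cast_le.1 hy.1, Int.cast_le.1 hy.2⟩
  exact ⟨hy', (straightPos_nodeAt x hy').trans hz.symm⟩

lemma exists_vertex_of_node_mem_curve_inter {a b : Sym2 V} (ha : a ∈ G.edgeSet)
    (hb : b ∈ G.edgeSet) (hab : a ≠ b) {n : V ⊕ Γ.Dummy} {y : ℤ} (hn : nodeRow n = y)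
    (hna : (nodePos n, (y : ℝ)) ∈ Γ.curve a) (hnb : (nodePos n, (y : ℝ)) ∈ Γ.curve b)
    (x : V → ℝ) : ∃ v, v ∈ a ∧ v ∈ b ∧ Γ.place x v = (straightPos x n, (y : ℝ)) := by
  obtain ⟨v, hva, hvb, hpos, rfl⟩ := exists_vertex_of_mem_curve_inter ha hb hab hna hnb
  rw [node_eq_of_row_eq_of_pos_eq n (.inl v) hn hpos.symm]
  exact ⟨v, hva, hvb, rfl⟩

lemma UpEdge.lineX_add (e : Γ.UpEdge) (x : V → ℝ) (c τ : ℝ) :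
    e.lineX x (c + τ) = AffineMap.lineMap (e.lineX x c) (e.lineX x (c + 1)) τ := by
  simp only [lineX, AffineMap.lineMap_apply_ring']
  ring

lemma straightPos_endpt (x : V → ℝ) (b : Bool) (s : Γ.Strip) :
    straightPos x (Γ.levelGraph.endpt b s) = s.1.lineX x ((s.2 + b.toInt : ℤ) : ℝ) :=
  straightPos_nodeAt x (end_row_mem_Icc s b)

namespace IsStraightening

variable {x : V → ℝ} (hx : Γ.IsStraightening x)
include hx

lemma pos_le_of_straightPos_le {n n' : V ⊕ Γ.Dummy} (hrow : nodeRow n = nodeRow n')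
    (h : straightPos x n ≤ straightPos x n') : nodePos n ≤ nodePos n' :=
  not_lt.1 fun hlt => (hx _ _ hrow.symm hlt).not_ge h

lemma node_eq {n n' : V ⊕ Γ.Dummy} (hrow : nodeRow n = nodeRow n')
    (h : straightPos x n = straightPos x n') : n = n' :=
  node_eq_of_row_eq_of_pos_eq n n' hrow <|
    (hx.pos_le_of_straightPos_le hrow h.le).antisymm (hx.pos_le_of_straightPos_le hrow.symm h.ge)

lemma straightPos_le {n n' : V ⊕ Γ.Dummy} (hrow : nodeRow n = nodeRow n')
    (h : nodePos n ≤ nodePos n') : straightPos x n ≤ straightPos x n' := by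
  rcases h.lt_or_eq with hlt | heq
  · exact (hx _ _ hrow hlt).le
  · rw [node_eq_of_row_eq_of_pos_eq _ _ hrow heq]

lemma injective_place : Function.Injective (Γ.place x) := fun _ _ h =>
  Sum.inl_injective (hx.node_eq (Int.cast_injective (congrArg Prod.snd h)) (congrArg Prod.fst h))

lemma mem_edgeSegment_flat {u v : V} (hrow : Γ.row u = Γ.row v) (huv : Γ.x u < Γ.x v) {r : Pt} :
    r ∈ edgeSegment (Γ.place x) s(u, v) ↔ r.2 = Γ.row u ∧ r.1 ∈ Icc (x u) (x v) :=
  mem_segment_iff_of_snd_eq (congrArg (Int.cast : ℤ → ℝ) hrow)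
    (hx (.inl u) (.inl v) hrow huv).le

lemma node_mem_curve_flat {u v : V} (hadj : s(u, v) ∈ G.edgeSet) (hrow : Γ.row u = Γ.row v)
    {n : V ⊕ Γ.Dummy} (hn : nodeRow n = Γ.row u) (h : straightPos x n ∈ Icc (x u) (x v)) :
    (nodePos n, (Γ.row u : ℝ)) ∈ Γ.curve s(u, v) := by
  have hu := (Γ.vertex_mem_curve_iff _ hadj u).2 (Sym2.mem_mk_left u v)
  have hv := (Γ.vertex_mem_curve_iff _ hadj v).2 (Sym2.mem_mk_right u v)
  rw [← hrow] at hv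
  exact (Γ.ordConnected_slice _ hadj (Γ.row u)).out hu hv
    ⟨hx.pos_le_of_straightPos_le (n := .inl u) hn.symm h.1,
      hx.pos_le_of_straightPos_le (n' := .inl v) (hn.trans hrow) h.2⟩

lemma mem_of_place_mem_edgeSegment {a : Sym2 V} (ha : a ∈ G.edgeSet) {w : V}
    (hw : Γ.place x w ∈ edgeSegment (Γ.place x) a) : w ∈ a := by
  rcases eq_edge_or_eq_flat (Γ := Γ) ha with ⟨e, rfl⟩ | ⟨u, v, rfl, hrow, huv⟩
  · obtain ⟨hy, hpos⟩ := exists_nodeAt_of_mem_edgeSegment hw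
    exact (UpEdge.mem_edge_of_nodeAt_eq_inl hy
      (hx.node_eq (n' := .inl w) (nodeRow_nodeAt hy) hpos)).1
  · obtain ⟨hy, hmem⟩ := (hx.mem_edgeSegment_flat hrow huv).1 hw
    have hy : Γ.row w = Γ.row u := Int.cast_injective hy
    have h := hx.node_mem_curve_flat ha hrow (n := .inl w) hy hmem
    rw [← hy] at h
    exact (Γ.vertex_mem_curve_iff _ ha w).1 h

lemma lineX_lt_lineX {s t : Γ.Strip} (hrow : (s.2 : ℤ) = t.2)
    (hst : Γ.strips.pos s < Γ.strips.pos t) {τ : ℝ} (hτ : τ ∈ Ioo (0 : ℝ) 1) :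
    s.1.lineX x ((s.2 : ℤ) + τ) < t.1.lineX x ((s.2 : ℤ) + τ) := by
  let L := Γ.levelGraph
  have hrow' : L.strips.row s = L.strips.row t := hrow
  have le (b : Bool) : straightPos x (L.endpt b s) ≤ straightPos x (L.endpt b t) :=
    hx.straightPos_le (L.row_endpt_eq hrow') (L.pos_endpt_mono hrow' hst.le)
  have ne : ∃ b, straightPos x (L.endpt b s) ≠ straightPos x (L.endpt b t) := by
    by_contra! h
    refine hst.ne (congrArg _ (L.eq_of_endpt_eq hrow' fun b => ?_))
    exact hx.node_eq (L.row_endpt_eq hrow') (h b)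
  have hτ₁ := sub_pos.2 hτ.2
  simp only [L, straightPos_endpt, ← hrow, Bool.forall_bool, Bool.exists_bool, Bool.toInt_false,
    Bool.toInt_true, Int.cast_add, Int.cast_zero, Int.cast_one, add_zero] at le ne
  rw [s.1.lineX_add, t.1.lineX_add, AffineMap.lineMap_apply_ring, AffineMap.lineMap_apply_ring]
  rcases ne with ne | ne
  · exact add_lt_add_of_lt_of_le (mul_lt_mul_of_pos_left (le.1.lt_of_ne ne) hτ₁)
      (mul_le_mul_of_nonneg_left le.2 hτ.1.le)
  · exact add_lt_add_of_le_of_lt (mul_le_mul_of_nonneg_left le.1 hτ₁.le)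
      (mul_lt_mul_of_pos_left (le.2.lt_of_ne ne) hτ.1)

lemma edge_eq_of_lineX_eq {e f : Γ.UpEdge} {c : ℝ} (hc : Int.fract c ≠ 0)
    (he : c ∈ Icc (Γ.row e.bot : ℝ) (Γ.row e.top)) (hf : c ∈ Icc (Γ.row f.bot : ℝ) (Γ.row f.top))
    (h : e.lineX x c = f.lineX x c) : e = f := by
  have floor_mem (e : Γ.UpEdge) (he : c ∈ Icc (Γ.row e.bot : ℝ) (Γ.row e.top)) :
      ⌊c⌋ ∈ Ico (Γ.row e.bot) (Γ.row e.top) :=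
    ⟨Int.le_floor.2 he.1, Int.floor_lt.2 (he.2.lt_of_ne fun heq => hc (by simp [heq]))⟩
  let s : Γ.Strip := ⟨e, ⌊c⌋, floor_mem e he⟩
  let t : Γ.Strip := ⟨f, ⌊c⌋, floor_mem f hf⟩
  have hτ : Int.fract c ∈ Ioo (0 : ℝ) 1 :=
    ⟨(Int.fract_nonneg c).lt_of_ne' hc, Int.fract_lt_one c⟩
  rw [← Int.floor_add_fract c] at h
  rcases lt_trichotomy (Γ.strips.pos s) (Γ.strips.pos t) with hlt | heq | hlt
  · exact absurd h (hx.lineX_lt_lineX (s := s) (t := t) rfl hlt hτ).ne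
  · exact congrArg Sigma.fst (Γ.strips.eq_of_row_eq_of_pos_eq s t rfl heq)
  · exact absurd h (hx.lineX_lt_lineX (s := t) (t := s) rfl hlt hτ).ne'

lemma exists_vertex_eq_of_edge_of_edge {e f : Γ.UpEdge} (hef : e ≠ f) {r : Pt}
    (he : r ∈ edgeSegment (Γ.place x) e.edge) (hf : r ∈ edgeSegment (Γ.place x) f.edge) :
    ∃ v, v ∈ e.edge ∧ v ∈ f.edge ∧ Γ.place x v = r := by
  have edge_ne : e.edge ≠ f.edge := UpEdge.edge_injective.ne hef
  obtain ⟨z, c⟩ := r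
  by_cases hc : Int.fract c = 0
  · obtain ⟨y, rfl⟩ := Int.fract_eq_zero_iff.1 hc
    obtain ⟨hye, hpos_e⟩ := exists_nodeAt_of_mem_edgeSegment he
    obtain ⟨hyf, hpos_f⟩ := exists_nodeAt_of_mem_edgeSegment hf
    have node_eq : e.nodeAt y = f.nodeAt y :=
      hx.node_eq ((nodeRow_nodeAt hye).trans (nodeRow_nodeAt hyf).symm)
        (hpos_e.trans hpos_f.symm)
    rw [← hpos_e]
    refine exists_vertex_of_node_mem_curve_inter e.edge_mem f.edge_mem edge_ne
      (nodeRow_nodeAt hye) (nodePos_nodeAt_mem hye) ?_ x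
    rw [node_eq]
    exact nodePos_nodeAt_mem hyf
  · obtain ⟨hce, hze⟩ := mem_edgeSegment_edge.1 he
    obtain ⟨hcf, hzf⟩ := mem_edgeSegment_edge.1 hf
    exact absurd (hx.edge_eq_of_lineX_eq hc hce hcf (hze.symm.trans hzf)) hef

lemma exists_vertex_eq_of_edge_of_flat {e : Γ.UpEdge} {u v : V} (hadj : s(u, v) ∈ G.edgeSet)
    (hrow : Γ.row u = Γ.row v) (huv : Γ.x u < Γ.x v) {r : Pt}
    (he : r ∈ edgeSegment (Γ.place x) e.edge) (hf : r ∈ edgeSegment (Γ.place x) s(u, v)) :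
    ∃ w, w ∈ e.edge ∧ w ∈ s(u, v) ∧ Γ.place x w = r := by
  obtain ⟨z, c⟩ := r
  obtain ⟨rfl, hz⟩ := (hx.mem_edgeSegment_flat hrow huv).1 hf
  obtain ⟨hy, rfl⟩ := exists_nodeAt_of_mem_edgeSegment he
  refine exists_vertex_of_node_mem_curve_inter e.edge_mem hadj ?_ (nodeRow_nodeAt hy)
    (nodePos_nodeAt_mem hy) (hx.node_mem_curve_flat hadj hrow (nodeRow_nodeAt hy) hz) x
  rintro h
  rcases Sym2.eq_iff.1 h with ⟨rfl, rfl⟩ | ⟨rfl, rfl⟩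
  · exact e.row_lt.ne hrow
  · exact e.row_lt.ne' hrow

lemma exists_vertex_eq_of_flat_of_flat {u v u' v' : V} (ha : s(u, v) ∈ G.edgeSet)
    (hb : s(u', v') ∈ G.edgeSet) (hab : s(u, v) ≠ s(u', v')) (hrow : Γ.row u = Γ.row v)
    (huv : Γ.x u < Γ.x v) (hrow' : Γ.row u' = Γ.row v') (huv' : Γ.x u' < Γ.x v') {r : Pt}
    (hra : r ∈ edgeSegment (Γ.place x) s(u, v)) (hrb : r ∈ edgeSegment (Γ.place x) s(u', v')) :
    ∃ w, w ∈ s(u, v) ∧ w ∈ s(u', v') ∧ Γ.place x w = r := by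
  obtain ⟨hr, hz⟩ := (hx.mem_edgeSegment_flat hrow huv).1 hra
  obtain ⟨hr', hz'⟩ := (hx.mem_edgeSegment_flat hrow' huv').1 hrb
  have row_eq : Γ.row u = Γ.row u' := Int.cast_injective (hr.symm.trans hr')
  have mem_both (w : V) (hw : Γ.row w = Γ.row u) (hwa : x w ∈ Icc (x u) (x v))
      (hwb : x w ∈ Icc (x u') (x v')) : w ∈ s(u, v) ∧ w ∈ s(u', v') :=
    ⟨hx.mem_of_place_mem_edgeSegment ha <|
        (hx.mem_edgeSegment_flat hrow huv).2 ⟨congrArg (Int.cast : ℤ → ℝ) hw, hwa⟩,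
      hx.mem_of_place_mem_edgeSegment hb <|
        (hx.mem_edgeSegment_flat hrow' huv').2 ⟨congrArg (Int.cast : ℤ → ℝ) (hw.trans row_eq), hwb⟩⟩
  obtain ⟨l, hl_row, hl, hla, hlb⟩ : ∃ l, Γ.row l = Γ.row u ∧ x l ≤ r.1 ∧ x u ≤ x l ∧ x u' ≤ x l :=
    (le_total (x u) (x u')).elim (fun h => ⟨u', row_eq.symm, hz'.1, h, le_rfl⟩)
      fun h => ⟨u, rfl, hz.1, le_rfl, h⟩
  obtain ⟨m, hm_row, hm, hma, hmb⟩ : ∃ m, Γ.row m = Γ.row u ∧ r.1 ≤ x m ∧ x m ≤ x v ∧ x m ≤ x v' :=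
    (le_total (x v) (x v')).elim (fun h => ⟨v, hrow.symm, hz.2, le_rfl, h⟩)
      fun h => ⟨v', (row_eq.trans hrow').symm, hz'.2, h, le_rfl⟩
  have l_mem := mem_both l hl_row ⟨hla, hl.trans hz.2⟩ ⟨hlb, hl.trans hz'.2⟩
  have m_mem := mem_both m hm_row ⟨hz.1.trans hm, hma⟩ ⟨hz'.1.trans hm, hmb⟩
  obtain rfl : l = m := by_contra fun hne =>
    hab (Sym2.eq_of_ne_mem hne l_mem.1 m_mem.1 l_mem.2 m_mem.2)
  exact ⟨l, l_mem.1, l_mem.2, Prod.ext (hl.antisymm hm) ((congrArg _ hl_row).trans hr.symm)⟩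

theorem isCrossingFree : IsCrossingFree G (Γ.place x) (edgeSegment (Γ.place x)) where
  injective := hx.injective_place
  mem_of_mem_curve _ ha _ := hx.mem_of_place_mem_edgeSegment ha
  exists_vertex_eq a ha b hb hab r hra hrb := by
    rcases eq_edge_or_eq_flat (Γ := Γ) ha with ⟨e, rfl⟩ | ⟨u, v, rfl, hrow, huv⟩ <;>
      rcases eq_edge_or_eq_flat (Γ := Γ) hb with ⟨f, rfl⟩ | ⟨u', v', rfl, hrow', huv'⟩
    · exact hx.exists_vertex_eq_of_edge_of_edge (fun h => hab (congrArg _ h)) hra hrb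
    · exact hx.exists_vertex_eq_of_edge_of_flat hb hrow' huv' hra hrb
    · obtain ⟨w, hwb, hwa, hw⟩ := hx.exists_vertex_eq_of_edge_of_flat ha hrow huv hrb hra
      exact ⟨w, hwa, hwb, hw⟩
    · exact hx.exists_vertex_eq_of_flat_of_flat ha hb hab hrow huv hrow' huv' hra hrb

end IsStraightening

end MonotoneCurves

lemma chainSet_nil : chainSet [] = ∅ := by simp [chainSet, chainSegs]

lemma chainSet_singleton (p : Pt) : chainSet [p] = ∅ := by simp [chainSet, chainSegs]

lemma chainSet_cons_cons (p q : Pt) (l : List Pt) :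
    chainSet (p :: q :: l) = segment ℝ p q ∪ chainSet (q :: l) := by
  simp [chainSet, chainSegs]

lemma chainSet_pair (p q : Pt) : chainSet [p, q] = segment ℝ p q := by
  rw [chainSet_cons_cons, chainSet_singleton, union_empty]

lemma chainSet_append_pair (q r : Pt) :
    ∀ l : List Pt, chainSet (l ++ [q, r]) = chainSet (l ++ [q]) ∪ segment ℝ q r
  | [] => by rw [List.nil_append, List.nil_append, chainSet_pair, chainSet_singleton, empty_union]
  | [p] => chainSet_cons_cons p q [r] |>.trans <| by
      rw [chainSet_pair, List.singleton_append, chainSet_pair]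
  | p :: p' :: l => by
      simp only [List.cons_append, chainSet_cons_cons, union_assoc]
      rw [← List.cons_append, chainSet_append_pair q r (p' :: l), List.cons_append]

lemma chainSet_reverse : ∀ l : List Pt, chainSet l.reverse = chainSet l
  | [] => rfl
  | [_] => rfl
  | p :: q :: l => by
      rw [List.reverse_cons, List.reverse_cons, List.append_assoc, List.singleton_append,
        chainSet_append_pair, ← List.reverse_cons, chainSet_reverse (q :: l), chainSet_cons_cons,
        segment_symm, union_comm]

lemma head_mem_chainSet {p : Pt} {l : List Pt} (hl : l ≠ []) : p ∈ chainSet (p :: l) := by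
  obtain ⟨q, l, rfl⟩ := List.exists_cons_of_ne_nil hl
  rw [chainSet_cons_cons]
  exact .inl (left_mem_segment ℝ p q)

/-- The corners of a polygonal chain are listed from bottom to top. -/
def IsAscending (l : List Pt) : Prop := l.Pairwise fun p q => p.2 ≤ q.2

lemma IsMonoChain.isAscending_or_reverse {l : List Pt} (h : IsMonoChain l) :
    IsAscending l ∨ IsAscending l.reverse := by
  refine h.imp (fun h => ?_) fun h => ?_
  · have h : (l.map Prod.snd).IsChain (· ≤ ·) := h
    rwa [List.isChain_iff_pairwise, List.pairwise_map] at h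
  · have h : (l.map Prod.snd).IsChain (· ≥ ·) := h
    rw [List.isChain_iff_pairwise, List.pairwise_map] at h
    exact List.pairwise_reverse.2 h

lemma snd_mem_Icc_of_mem_segment {p q r : Pt} (h : p.2 ≤ q.2) (hr : r ∈ segment ℝ p q) :
    r.2 ∈ Icc p.2 q.2 := by
  rw [← segment_eq_Icc h]
  exact (Prod.segment_subset _ _ hr).2

lemma ordConnected_slice_segment (p q : Pt) (c : ℝ) :
    {z | (z, c) ∈ segment ℝ p q}.OrdConnected :=
  ((convex_segment p q).affine_preimage
    ((AffineMap.id ℝ ℝ).prod (AffineMap.const ℝ ℝ c))).ordConnected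

namespace IsAscending

variable {p q : Pt} {l : List Pt}

lemma tail (h : IsAscending (p :: l)) : IsAscending l := (List.pairwise_cons.1 h).2

lemma head_le (h : IsAscending (p :: l)) (hq : q ∈ l) : p.2 ≤ q.2 := (List.pairwise_cons.1 h).1 q hq

lemma le_snd_of_mem_chainSet {r : Pt} :
    ∀ {p : Pt} {l : List Pt}, IsAscending (p :: l) → r ∈ chainSet (p :: l) → p.2 ≤ r.2
  | _, [], _, hr => by
      rw [chainSet_singleton] at hr
      exact hr.elim
  | _, _ :: _, h, hr => by
      have hpq := h.head_le List.mem_cons_self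
      rw [chainSet_cons_cons] at hr
      rcases hr with hr | hr
      · exact (snd_mem_Icc_of_mem_segment hpq hr).1
      · exact hpq.trans (h.tail.le_snd_of_mem_chainSet hr)

lemma ordConnected_slice (c : ℝ) :
    ∀ {l : List Pt}, IsAscending l → {z | (z, c) ∈ chainSet l}.OrdConnected
  | [], _ => by
      simp only [chainSet_nil, mem_empty_iff_false, ofPred_false, ordConnected_empty]
  | [_], _ => by
      simp only [chainSet_singleton, mem_empty_iff_false, ofPred_false, ordConnected_empty]
  | p :: q :: l, h => by
      let first := {z | (z, c) ∈ segment ℝ p q}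
      let rest := {z | (z, c) ∈ chainSet (q :: l)}
      have first_conn : first.OrdConnected := ordConnected_slice_segment p q c
      have rest_conn : rest.OrdConnected := h.tail.ordConnected_slice c
      have union_eq : {z | (z, c) ∈ chainSet (p :: q :: l)} = first ∪ rest := by
        rw [chainSet_cons_cons]; rfl
      rw [union_eq]
      rcases first.eq_empty_or_nonempty with hfirst | ⟨z, hz⟩
      · rwa [hfirst, empty_union]
      rcases rest.eq_empty_or_nonempty with hrest | ⟨w, hw⟩
      · rwa [hrest, union_empty]
      obtain rfl : q.2 = c := (h.tail.le_snd_of_mem_chainSet hw).antisymm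
        (snd_mem_Icc_of_mem_segment (h.head_le List.mem_cons_self) hz).2
      have q_mem : q ∈ chainSet (q :: l) := head_mem_chainSet <| by
        rintro rfl
        exact (chainSet_singleton q).subset hw
      exact (first_conn.isPreconnected.union q.1 (right_mem_segment ℝ p q) q_mem
        rest_conn.isPreconnected).ordConnected

lemma exists_segment_subset {y : ℤ} : ∀ {p : Pt} {l : List Pt}, IsAscending (p :: l) →
    (∀ q ∈ l, ∃ b : ℤ, q.2 = b) → p.2 ≤ y → (∃ q ∈ l, (y : ℝ) < q.2) →
    ∃ c : Bool → ℝ, segment ℝ (c false, (y : ℝ)) (c true, (y : ℝ) + 1) ⊆ chainSet (p :: l)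
  | _, [], _, _, _, hq => by simp at hq
  | p, r :: l, h, hint, hp, ⟨q, hq, hyq⟩ => by
      rw [chainSet_cons_cons]
      rcases le_or_gt r.2 y with hr | hr
      · have hq : q ∈ l := (List.mem_cons.1 hq).resolve_left fun h => hyq.not_ge (h ▸ hr)
        obtain ⟨c, hc⟩ := h.tail.exists_segment_subset (fun q hq => hint q (.tail _ hq)) hr
          ⟨q, hq, hyq⟩
        exact ⟨c, hc.trans subset_union_right⟩
      · obtain ⟨b, hb⟩ := hint r List.mem_cons_self
        rw [hb, Int.cast_lt, ← Int.add_one_le_iff, ← Int.cast_le (R := ℝ), ← hb, Int.cast_add,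
          Int.cast_one] at hr
        have mem_segment (c : ℝ) (hc : c ∈ Icc (y : ℝ) (y + 1)) : ∃ z, (z, c) ∈ segment ℝ p r :=
          ⟨AffineMap.lineMap p.1 r.1 ((c - p.2) / (r.2 - p.2)),
            (mem_segment_iff_of_snd_lt (by linarith)).2
              ⟨⟨hp.trans hc.1, hc.2.trans hr⟩, rfl⟩⟩
        obtain ⟨z, hz⟩ := mem_segment y (left_mem_Icc.2 (by linarith))
        obtain ⟨w, hw⟩ := mem_segment (y + 1) (right_mem_Icc.2 (by linarith))
        exact ⟨fun b => bif b then w else z,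
          ((convex_segment p r).segment_subset hz hw).trans subset_union_left⟩

end IsAscending

namespace PolylineDrawing

variable {V : Type*} {G : SimpleGraph V} (D : PolylineDrawing G)

lemma chain_reverse (u v : V) : (D.chain u v).reverse = D.chain v u := by
  simp [chain, D.bends_symm u v]

lemma curve_comm (u v : V) : D.curve u v = D.curve v u := by
  rw [curve, ← chain_reverse, chainSet_reverse, curve]

/-- The curve of an undirected edge. -/
def edgeCurve : Sym2 V → Set Pt := Sym2.lift ⟨D.curve, D.curve_comm⟩

lemma pos_mem_curve (u v : V) : D.pos u ∈ D.curve u v := head_mem_chainSet (by simp)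

variable {D}

lemma pos_mem_edgeCurve {a : Sym2 V} {v : V} (hv : v ∈ a) : D.pos v ∈ D.edgeCurve a := by
  obtain ⟨w, rfl⟩ := hv
  exact D.pos_mem_curve v w

lemma ordConnected_slice_edgeCurve (hmono : D.IsYMonotone) {a : Sym2 V} (ha : a ∈ G.edgeSet)
    (c : ℝ) : {z | (z, c) ∈ D.edgeCurve a}.OrdConnected := by
  induction a with | _ u v
  rcases (hmono u v ha).isAscending_or_reverse with h | h
  · exact h.ordConnected_slice c
  · have h' := h.ordConnected_slice c
    rwa [chainSet_reverse] at h'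

lemma exists_segment_subset_curve (hmono : D.IsYMonotone)
    (hint : ∀ p ∈ D.points, ∃ b : ℤ, p.2 = b) {u v : V} (huv : G.Adj u v) {y : ℤ}
    (hu : (D.pos u).2 ≤ y) (hv : (y : ℝ) < (D.pos v).2) :
    ∃ c : Bool → ℝ, segment ℝ (c false, (y : ℝ)) (c true, (y : ℝ) + 1) ⊆ D.curve u v := by
  rcases (hmono u v huv).isAscending_or_reverse with h | h
  · refine h.exists_segment_subset (fun q hq => hint q ?_) hu ⟨D.pos v, by simp, hv⟩
    rcases List.mem_append.1 hq with hq | hq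
    · exact .inr (mem_iUnion₂.2 ⟨u, v, mem_iUnion.2 ⟨huv, hq⟩⟩)
    · exact .inl ⟨v, (List.mem_singleton.1 hq).symm⟩
  · rw [chain_reverse] at h
    exact absurd (h.head_le (q := D.pos u) (by simp)) (hu.trans_lt hv).not_ge

lemma IsPlanar.isCrossingFree (h : D.IsPlanar) : IsCrossingFree G D.pos D.edgeCurve where
  injective := h.1
  mem_of_mem_curve a ha w hw := by
    induction a with | _ u v
    by_contra hne
    rw [Sym2.mem_iff, not_or] at hne
    exact h.2.2.1 u v w ha hne.1 hne.2 hw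
  exists_vertex_eq a ha b hb hab r hra hrb := by
    induction a with | _ u v
    induction b with | _ u' v'
    obtain ⟨w, hw, hwr⟩ := h.2.2.2 u v u' v' ha hb hab ⟨hra, hrb⟩
    exact ⟨w, Sym2.mem_iff.2 hw.1, Sym2.mem_iff.2 hw.2, hwr⟩

lemma IsStraightLine.chain_eq (hD : D.IsStraightLine) (u v : V) :
    D.chain u v = [D.pos u, D.pos v] := by
  rw [chain, hD u v, List.nil_append]

lemma IsStraightLine.edgeCurve_eq (hD : D.IsStraightLine) : D.edgeCurve = edgeSegment D.pos := by
  ext1 a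
  induction a with | _ u v
  exact (congrArg chainSet (hD.chain_eq u v)).trans (chainSet_pair _ _)

lemma IsStraightLine.points_eq (hD : D.IsStraightLine) : D.points = range D.pos := by
  simp [points, hD _ _]

lemma IsStraightLine.isPlanar (hD : D.IsStraightLine)
    (h : IsCrossingFree G D.pos D.edgeCurve) : D.IsPlanar := by
  refine ⟨h.injective, fun u v huv => ?_, fun u v w huv hwu hwv hw => ?_,
    fun u v u' v' huv huv' hne r hr => ?_⟩
  · rw [hD.chain_eq]
    refine ⟨⟨le_rfl, List.nodup_cons.2 ⟨?_, List.nodup_singleton _⟩, ?_⟩, ?_⟩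
    · exact fun hmem => huv.ne (h.injective (List.mem_singleton.1 hmem))
    · intro i j hij _ hj
      exact absurd (hij.trans_le (Nat.lt_one_iff.1 hj).le) (Nat.not_lt_zero i)
    · exact fun i hi => absurd hi (Nat.not_lt.2 (Nat.le_add_left 2 i))
  · exact (Sym2.mem_iff.1 (h.mem_of_mem_curve s(u, v) huv w hw)).elim hwu hwv
  · obtain ⟨w, hw, hw', hwr⟩ := h.exists_vertex_eq s(u, v) huv s(u', v') huv' hne r hr.1 hr.2
    exact ⟨w, ⟨Sym2.mem_iff.1 hw, Sym2.mem_iff.1 hw'⟩, hwr⟩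

lemma IsStraightLine.inHeight {D' : PolylineDrawing G} (hD' : D'.IsStraightLine)
    (hy : ∀ v, (D'.pos v).2 = (D.pos v).2) {h : ℕ} (hh : D.InHeight h) : D'.InHeight h := by
  obtain ⟨y₀, hy₀⟩ := hh
  refine ⟨y₀, fun p hp => ?_⟩
  rw [hD'.points_eq] at hp
  obtain ⟨v, rfl⟩ := hp
  rw [hy v]
  exact hy₀ _ (.inl ⟨v, rfl⟩)

/-- The point sets of the curves of a crossing-free y-monotone poly-line drawing whose vertices and
bends have integer y-coordinates. -/
def toMonotoneCurves (hD : IsCrossingFree G D.pos D.edgeCurve) (hmono : D.IsYMonotone)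
    (hint : ∀ p ∈ D.points, ∃ b : ℤ, p.2 = b) (row : V → ℤ) (hrow : ∀ v, (D.pos v).2 = row v) :
    MonotoneCurves G where
  row := row
  x v := (D.pos v).1
  curve := D.edgeCurve
  eq_of_row_eq_of_x_eq u v hr hx := hD.injective (Prod.ext hx (by rw [hrow, hrow, hr]))
  ordConnected_slice _ ha c := ordConnected_slice_edgeCurve hmono ha c
  vertex_mem_curve_iff a ha v := by
    rw [← hrow]
    exact ⟨hD.mem_of_mem_curve a ha v, pos_mem_edgeCurve⟩
  exists_vertex_eq a ha b hb hab r hra hrb := by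
    simp only [← hrow]
    exact hD.exists_vertex_eq a ha b hb hab r hra hrb
  exists_segment_subset u v huv y hu hv :=
    exists_segment_subset_curve hmono hint huv ((hrow u).trans_le (Int.cast_le.2 hu))
      ((Int.cast_lt.2 hv).trans_eq (hrow v).symm)

end PolylineDrawing

theorem yMonotonePolyline_to_straightLine_general {V : Type*} [Finite V] {G : SimpleGraph V}
    (D : PolylineDrawing G) (hD : IsCrossingFree G D.pos D.edgeCurve)
    (hint : ∀ p ∈ D.points, ∃ b : ℤ, p.2 = b) (hmono : D.IsYMonotone) :
    ∃ D' : PolylineDrawing G, D'.IsStraightLine ∧ D'.IsPlanar ∧ D'.IntCoords ∧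
      (∀ v, (D'.pos v).2 = (D.pos v).2) ∧
      (∀ v w : V, (D.pos v).2 = (D.pos w).2 → (D.pos v).1 < (D.pos w).1 →
        (D'.pos v).1 < (D'.pos w).1) := by
  choose row hrow using fun v => hint (D.pos v) (.inl ⟨v, rfl⟩)
  let Γ := PolylineDrawing.toMonotoneCurves hD hmono hint row hrow
  obtain ⟨x, hx⟩ := Γ.exists_int_isStraightening
  let D' : PolylineDrawing G := ⟨Γ.place fun v => x v, fun _ _ => [], fun _ _ => rfl⟩
  have straight : D'.IsStraightLine := fun _ _ => rfl
  refine ⟨D', straight, straight.isPlanar ?_, ?_, fun v => (hrow v).symm, fun v w hvw hlt => ?_⟩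
  · rw [straight.edgeCurve_eq]
    exact hx.isCrossingFree
  · rw [PolylineDrawing.IntCoords, straight.points_eq]
    rintro _ ⟨v, rfl⟩
    exact ⟨⟨x v, rfl⟩, ⟨row v, rfl⟩⟩
  · rw [hrow, hrow, Int.cast_inj] at hvw
    exact hx (.inl v) (.inl w) hvw hlt

/-- Any planar y-monotone poly-line drawing `D` of height `h` of a
finite simple graph `G` can be transformed into a planar straight-line drawing with
the same y-coordinates and the same left-to-right order in each row; in particular
this straight-line drawing has height `h` as well. -/
theorem yMonotonePolyline_to_straightLine {V : Type} [Fintype V] (G : SimpleGraph V)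
    (h : ℕ) (D : PolylineDrawing G) (hpl : D.IsPlanar) (hint : D.IntCoords)
    (hmono : D.IsYMonotone) (hheight : D.InHeight h) :
    ∃ D' : PolylineDrawing G, D'.IsStraightLine ∧ D'.IsPlanar ∧ D'.IntCoords ∧
      (∀ v, (D'.pos v).2 = (D.pos v).2) ∧
      (∀ v w : V, (D.pos v).2 = (D.pos w).2 → (D.pos v).1 < (D.pos w).1 →
        (D'.pos v).1 < (D'.pos w).1) ∧
      D'.InHeight h := by
  obtain ⟨D', straight, planar, int, hy, hx⟩ :=
    yMonotonePolyline_to_straightLine_general D hpl.isCrossingFree (fun p hp => (hint p hp).2) hmono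
  exact ⟨D', straight, planar, int, hy, hx, straight.inHeight hy hheight⟩
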